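/- arXiv:1602.01678 — 4 statements merged into one kernel-verified Lean document; each statement's English description precedes it below -/
import Mathlib

section
/- (Main Theorem, Sec. 4.) Under the stated hypotheses, the following pointwise identity holds on ℝ⁴: (F + f)(F̄ + f̄) + X̄·(A X) + X·B̄ + B·X̄ = Ȳ·(A Y) + Y·B̄ + B·Ȳ − (f f̄)⁻¹·[Y·(A Y + B)]·[Ȳ·(Ā Ȳ + B̄)]. That is, the Lagrangian ℒ = (F+f)(F̄+f̄) + X̄ A X + X B̄ + B X̄ with the nilpotent constraint X = c/(2F) reduces, after using the equation of motion for F and F̄, to ℒ = Ȳ A Y + Y B̄ + B Ȳ − |Y(AY+B)|²/(f f̄) with Y = −c/(2f). -/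
open scoped BigOperators

/-- Partial derivative of a `Λ`-valued function on `ℝ⁴` in the `i`-th coordinate
direction. -/
noncomputable def pd {Λ : Type*} [NormedAddCommGroup Λ] [NormedSpace ℝ Λ]
    (i : Fin 4) (u : (Fin 4 → ℝ) → Λ) : (Fin 4 → ℝ) → Λ :=
  fun x => fderiv ℝ u x (Pi.single i 1)

/-- The second-order kinetic operator
`A u = e⁻¹ ∂_μ (e g^{μν} ∂_ν u) + i t^μ ∂_μ u + (i/2) e⁻¹ ∂_μ (e t^μ) u + r u`
of eq. (4.2). The conjugate operator `Ā` is `Aop e g (-t) r`. -/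
noncomputable def Aop {Λ : Type*} [NormedCommRing Λ] [NormedAlgebra ℂ Λ]
    (e : (Fin 4 → ℝ) → ℝ) (g : (Fin 4 → ℝ) → Fin 4 → Fin 4 → ℝ)
    (t : (Fin 4 → ℝ) → Fin 4 → ℝ) (r : (Fin 4 → ℝ) → ℝ)
    (u : (Fin 4 → ℝ) → Λ) : (Fin 4 → ℝ) → Λ :=
  fun x =>
    (e x)⁻¹ • (∑ μ : Fin 4, pd μ (fun y => e y • ∑ ν : Fin 4, g y μ ν • pd ν u y) x)
      + Complex.I • (∑ μ : Fin 4, t x μ • pd μ u x)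
      + ((2 : ℝ)⁻¹ * (e x)⁻¹ *
          ∑ μ : Fin 4, fderiv ℝ (fun y => e y * t y μ) x (Pi.single μ 1)) •
          (Complex.I • u x)
      + r x • u x

/-!
Write `ω = (F F̄)⁻¹`, `N = X (A X + B)`, `N̄ = X̄ (Ā X̄ + B̄)`. The equation of motion makes `F + f`
a multiple of `X̄`, so `f⁻¹ = -F⁻¹` against every factor that `X̄` annihilates; likewise for
`F̄ + f̄` and `X`. As `F X = c / 2 = -f Y`, this gives `Y - X = ω X̄ N` and `Ȳ - X̄ = ω X N̄`, while
`(F + f)(F̄ + f̄)` and the quartic term both equal `ω N N̄`.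

The kinetic terms are compared through the principal symbol of `A`: if `X² = 0` and `u = w X`, then
`X A u = -w g^{μν} ∂_μ X ∂_ν X`, whatever the lower-order terms of `A`, so that `A` and `Ā` may be
exchanged. With `X̄` in place of `X` and `u = Y - X` it gives `Ȳ A (Y - X) = ω N X̄ Ā X̄`.
-/

section RingInverse

theorem map_ringInverse_of_isUnit {M N : Type*} [MonoidWithZero M] [MonoidWithZero N]
    (φ : M →* N) {a : M} (ha : IsUnit a) : φ (Ring.inverse a) = Ring.inverse (φ a) := by
  obtain ⟨a, rfl⟩ := ha
  rw [Ring.inverse_unit]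
  exact (Ring.inverse_unit (Units.map φ a)).symm

theorem hasFDerivAt_linearIsometry_comp_iff {𝕜 E G H : Type*} [NontriviallyNormedField 𝕜]
    [NormedAddCommGroup E] [NormedSpace 𝕜 E] [NormedAddCommGroup G] [NormedSpace 𝕜 G]
    [NormedAddCommGroup H] [NormedSpace 𝕜 H] (ι : G →ₗᵢ[𝕜] H) {f : E → G} {f' : E →L[𝕜] G} {x : E} :
    HasFDerivAt (ι ∘ f) (ι.toContinuousLinearMap.comp f') x ↔ HasFDerivAt f f' x := by
  simp only [hasFDerivAt_iff_isLittleO]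
  rw [← Asymptotics.isLittleO_norm_left,
    ← Asymptotics.isLittleO_norm_left (f' := fun y => f y - f x - f' (y - x))]
  simp only [Function.comp_apply, ContinuousLinearMap.comp_apply,
    LinearIsometry.coe_toContinuousLinearMap, ← map_sub, LinearIsometry.norm_map]

variable {𝕜 E Λ : Type*} [NontriviallyNormedField 𝕜] [NormedAddCommGroup E] [NormedSpace 𝕜 E]
  [NormedCommRing Λ] [NormedAlgebra 𝕜 Λ] {F : E → Λ}

-- `Λ` may be incomplete: in its completion `Ring.inverse` is continuous and differentiable at
-- units, and the inverse of a unit of `Λ` lies in `Λ`.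
theorem coe_completion_ringInverse {a : Λ} (ha : IsUnit a) :
    ((Ring.inverse a : Λ) : UniformSpace.Completion Λ) =
      Ring.inverse (a : UniformSpace.Completion Λ) :=
  map_ringInverse_of_isUnit (UniformSpace.Completion.coeRingHom : Λ →+* _).toMonoidHom ha

theorem continuous_ringInverse_comp {T : Type*} [TopologicalSpace T] {F : T → Λ}
    (hF : Continuous F) (hFU : ∀ x, IsUnit (F x)) : Continuous fun x => Ring.inverse (F x) := by
  rw [UniformSpace.Completion.coe_isometry.isUniformInducing.isInducing.continuous_iff,
    continuous_iff_continuousAt]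
  intro x
  simp only [Function.comp_def, coe_completion_ringInverse (hFU _)]
  obtain ⟨a, ha⟩ := (hFU x).map (UniformSpace.Completion.coeRingHom : Λ →+* _)
  exact ContinuousAt.comp (ha ▸ NormedRing.inverse_continuousAt a)
    ((UniformSpace.Completion.continuous_coe Λ).comp hF).continuousAt

theorem hasFDerivAt_ringInverse_comp {F' : E →L[𝕜] Λ} {x : E} (hF : HasFDerivAt F F' x)
    (hFU : ∀ y, IsUnit (F y)) :
    HasFDerivAt (fun y => Ring.inverse (F y))
      ((ContinuousLinearMap.mul 𝕜 Λ (-(Ring.inverse (F x) * Ring.inverse (F x)))).comp F') x := by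
  let ι : Λ →ₗᵢ[𝕜] UniformSpace.Completion Λ := UniformSpace.Completion.toComplₗᵢ
  obtain ⟨a, ha⟩ : IsUnit (ι (F x)) :=
    (hFU x).map (UniformSpace.Completion.coeRingHom : Λ →+* _)
  have hιinv := hasFDerivAt_ringInverse (𝕜 := 𝕜) a
  rw [← Ring.inverse_unit, ha] at hιinv
  have hcomp := hιinv.comp x (ι.toContinuousLinearMap.hasFDerivAt.comp x hF)
  rw [← hasFDerivAt_linearIsometry_comp_iff ι]
  convert hcomp using 1
  · ext y
    exact coe_completion_ringInverse (hFU y)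
  · ext v
    simp only [map_neg, ContinuousLinearMap.neg_comp, ContinuousLinearMap.comp_neg, neg_apply,
      ContinuousLinearMap.comp_apply, ContinuousLinearMap.mul_apply',
      LinearIsometry.coe_toContinuousLinearMap, UniformSpace.Completion.coe_toComplₗᵢ,
      ← coe_completion_ringInverse (hFU x), ContinuousLinearMap.mulLeftRight_apply, neg_inj,
      UniformSpace.Completion.coe_mul, ι]
    ring

theorem contDiff_ringInverse_comp {n : ℕ∞} (hF : ContDiff 𝕜 n F) (hFU : ∀ x, IsUnit (F x)) :
    ContDiff 𝕜 n fun x => Ring.inverse (F x) := by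
  rw [contDiff_iff_forall_nat_le]
  intro m hm
  replace hF : ContDiff 𝕜 m F := hF.of_le (mod_cast hm)
  clear hm
  induction m with
  | zero => exact contDiff_zero.2 (continuous_ringInverse_comp hF.continuous hFU)
  | succ m ih =>
    obtain ⟨F', hF', hFF'⟩ := contDiff_succ_iff_hasFDerivAt.1 hF
    have hinv := ih (hF.of_le (mod_cast m.le_succ))
    exact contDiff_succ_iff_hasFDerivAt.2 ⟨_,
      ((ContinuousLinearMap.mul 𝕜 Λ).contDiff.comp (hinv.mul hinv).neg).clm_comp hF',
      fun x => hasFDerivAt_ringInverse_comp (hFF' x) hFU⟩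

theorem contDiff_of_eq_smul_mul_inverse {n : ℕ∞} {c X : E → Λ} (a : 𝕜) (hc : ContDiff 𝕜 n c)
    (hF : ContDiff 𝕜 n F) (hFU : ∀ x, IsUnit (F x))
    (hX : ∀ x, X x = a • (c x * Ring.inverse (F x))) : ContDiff 𝕜 n X := by
  rw [funext hX]
  exact (hc.mul (contDiff_ringInverse_comp hF hFU)).const_smul a

end RingInverse

section PartialDerivative

section NormedSpace

variable {V : Type*} [NormedAddCommGroup V] [NormedSpace ℝ V] {e : (Fin 4 → ℝ) → ℝ}
  {g : (Fin 4 → ℝ) → Fin 4 → Fin 4 → ℝ} {u v : (Fin 4 → ℝ) → V} {x : Fin 4 → ℝ}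

theorem differentiable_pd (hu : ContDiff ℝ 2 u) (i : Fin 4) : Differentiable ℝ (pd i u) :=
  ((hu.fderiv_right (m := 1) (by norm_num)).clm_apply contDiff_const).differentiable (by simp)

theorem pd_sub (hu : DifferentiableAt ℝ u x) (hv : DifferentiableAt ℝ v x) (i : Fin 4) :
    pd i (fun y => u y - v y) x = pd i u x - pd i v x := by
  simp only [pd, fderiv_fun_sub hu hv, sub_apply]

theorem differentiable_flux (he : Differentiable ℝ e) (hg : Differentiable ℝ g)
    (hu : ContDiff ℝ 2 u) (μ : Fin 4) :
    Differentiable ℝ fun y => e y • ∑ ν, g y μ ν • pd ν u y :=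
  he.smul <| Differentiable.fun_sum fun ν _ =>
    (differentiable_pi.1 (differentiable_pi.1 hg μ) ν).smul (differentiable_pd hu ν)

end NormedSpace

variable {Λ : Type*} [NormedCommRing Λ] [NormedAlgebra ℝ Λ]
  {g : (Fin 4 → ℝ) → Fin 4 → Fin 4 → ℝ} {u v X w : (Fin 4 → ℝ) → Λ} {x : Fin 4 → ℝ}

theorem mul_pd_eq_neg_of_mul_eq_zero (hu : DifferentiableAt ℝ u x) (hv : DifferentiableAt ℝ v x)
    (huv : ∀ y, u y * v y = 0) (i : Fin 4) : u x * pd i v x = -(pd i u x * v x) := by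
  have hleibniz : fderiv ℝ (fun y => u y * v y) x (Pi.single i 1) =
      u x * pd i v x + v x * pd i u x := by
    rw [fderiv_fun_mul hu hv]; rfl
  have hzero : fderiv ℝ (fun y => u y * v y) x (Pi.single i 1) = 0 := by simp [huv]
  linear_combination hzero - hleibniz

theorem mul_pd_self_eq_zero (hX : DifferentiableAt ℝ X x) (hX2 : ∀ y, X y * X y = 0) (i : Fin 4) :
    X x * pd i X x = 0 := by
  have h := mul_pd_eq_neg_of_mul_eq_zero hX hX hX2 i
  have : IsAddTorsionFree Λ := .of_isTorsionFree ℝ Λ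
  rwa [mul_comm (pd i X x), self_eq_neg] at h

theorem mul_pd_eq_zero_of_eq_mul (hX : DifferentiableAt ℝ X x) (hu : DifferentiableAt ℝ u x)
    (hX2 : ∀ y, X y * X y = 0) (hu_eq : ∀ y, u y = X y * w y) (i : Fin 4) :
    X x * pd i u x = 0 := by
  have hXu : ∀ y, X y * u y = 0 := fun y => by rw [hu_eq, ← mul_assoc, hX2, zero_mul]
  rw [mul_pd_eq_neg_of_mul_eq_zero hX hu hXu]
  linear_combination -pd i X x * hu_eq x - w x * mul_pd_self_eq_zero hX hX2 i

-- No derivative of `w` is taken: second derivatives of `X` are traded for first derivatives by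
-- differentiating `∂ᵢX · u = 0` and `X · ∂ᵢX = 0`.
theorem pd_mul_pd_of_eq_mul (hX : ContDiff ℝ 2 X) (hu : DifferentiableAt ℝ u x)
    (hX2 : ∀ y, X y * X y = 0) (hu_eq : ∀ y, u y = X y * w y) (i j : Fin 4) :
    pd i X x * pd j u x = w x * (pd i X x * pd j X x) := by
  have hXd : Differentiable ℝ X := hX.differentiable (by simp)
  have hXX : ∀ y, X y * pd i X y = 0 := fun y => mul_pd_self_eq_zero (hXd y) hX2 i
  have hXu : ∀ y, pd i X y * u y = 0 := fun y => by
    linear_combination pd i X y * hu_eq y + w y * hXX y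
  have hdXX := mul_pd_eq_neg_of_mul_eq_zero (hXd x) (differentiable_pd hX i x) hXX j
  have hdXu := mul_pd_eq_neg_of_mul_eq_zero (differentiable_pd hX i x) hu hXu j
  linear_combination hdXu - pd j (pd i X) x * hu_eq x - w x * hdXX

/-- The principal symbol `g^{μν} ∂_μ u ∂_ν v` of `Aop e g t r`, as a bilinear form in the gradients
of `u` and `v`. -/
noncomputable def gradientForm (g : (Fin 4 → ℝ) → Fin 4 → Fin 4 → ℝ) (u v : (Fin 4 → ℝ) → Λ) :
    (Fin 4 → ℝ) → Λ :=
  fun x => ∑ μ, ∑ ν, g x μ ν • (pd μ u x * pd ν v x)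

theorem gradientForm_of_eq_mul (hX : ContDiff ℝ 2 X) (hu : Differentiable ℝ u)
    (hX2 : ∀ y, X y * X y = 0) (hu_eq : ∀ y, u y = X y * w y) (x : Fin 4 → ℝ) :
    gradientForm g X u x = w x * gradientForm g X X x := by
  simp only [gradientForm, pd_mul_pd_of_eq_mul hX (hu x) hX2 hu_eq, Finset.mul_sum, mul_smul_comm]

end PartialDerivative

section KineticOperator

variable {Λ : Type*} [NormedCommRing Λ] [NormedAlgebra ℂ Λ]
  {e : (Fin 4 → ℝ) → ℝ} {g : (Fin 4 → ℝ) → Fin 4 → Fin 4 → ℝ} {u v X w : (Fin 4 → ℝ) → Λ}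

theorem Aop_sub (t : (Fin 4 → ℝ) → Fin 4 → ℝ) (r : (Fin 4 → ℝ) → ℝ) (he : Differentiable ℝ e)
    (hg : Differentiable ℝ g) (hu : ContDiff ℝ 2 u) (hv : ContDiff ℝ 2 v) (x : Fin 4 → ℝ) :
    Aop e g t r (fun y => u y - v y) x = Aop e g t r u x - Aop e g t r v x := by
  have hpd : ∀ i y, pd i (fun z => u z - v z) y = pd i u y - pd i v y := fun i y =>
    pd_sub (hu.differentiable (by simp) y) (hv.differentiable (by simp) y) i
  have hflux := fun μ =>
    pd_sub (differentiable_flux he hg hu μ x) (differentiable_flux he hg hv μ x) μ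
  simp only [Aop, hpd, smul_sub, Finset.sum_sub_distrib, hflux]
  abel

theorem mul_Aop_of_mul_pd_eq_zero (t : (Fin 4 → ℝ) → Fin 4 → ℝ) (r : (Fin 4 → ℝ) → ℝ)
    (he : Differentiable ℝ e) (he0 : ∀ x, e x ≠ 0) (hg : Differentiable ℝ g)
    (hX : Differentiable ℝ X) (hu : ContDiff ℝ 2 u) (hXu : ∀ y, X y * u y = 0)
    (hXdu : ∀ i y, X y * pd i u y = 0) (x : Fin 4 → ℝ) :
    X x * Aop e g t r u x = -gradientForm g X u x := by
  have hXflux : ∀ μ y, X y * (e y • ∑ ν, g y μ ν • pd ν u y) = 0 := fun μ y => by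
    simp only [mul_smul_comm, Finset.mul_sum, hXdu, smul_zero, Finset.sum_const_zero]
  have hdflux : ∀ μ, X x * pd μ (fun y => e y • ∑ ν, g y μ ν • pd ν u y) x =
      -(e x • ∑ ν, g x μ ν • (pd μ X x * pd ν u x)) := fun μ => by
    rw [mul_pd_eq_neg_of_mul_eq_zero (hX x) (differentiable_flux he hg hu μ x) (hXflux μ)]
    simp only [mul_smul_comm, Finset.mul_sum]
  simp only [Aop, gradientForm, mul_add, mul_smul_comm, Finset.mul_sum, hXu, hXdu, hdflux,
    smul_zero, Finset.sum_const_zero, add_zero, Finset.sum_neg_distrib, smul_neg,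
    ← Finset.smul_sum, inv_smul_smul₀ (he0 x)]

theorem mul_Aop_of_eq_mul (t : (Fin 4 → ℝ) → Fin 4 → ℝ) (r : (Fin 4 → ℝ) → ℝ)
    (he : Differentiable ℝ e) (he0 : ∀ x, e x ≠ 0) (hg : Differentiable ℝ g)
    (hX : ContDiff ℝ 2 X) (hu : ContDiff ℝ 2 u) (hX2 : ∀ y, X y * X y = 0)
    (hu_eq : ∀ y, u y = X y * w y) (x : Fin 4 → ℝ) :
    X x * Aop e g t r u x = -(w x * gradientForm g X X x) := by
  have hXd : Differentiable ℝ X := hX.differentiable (by simp)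
  have hud : Differentiable ℝ u := hu.differentiable (by simp)
  rw [mul_Aop_of_mul_pd_eq_zero t r he he0 hg hXd hu
      (fun y => by rw [hu_eq, ← mul_assoc, hX2, zero_mul])
      (fun i y => mul_pd_eq_zero_of_eq_mul (hXd y) (hud y) hX2 hu_eq i),
    gradientForm_of_eq_mul hX hud hX2 hu_eq]

theorem mul_Aop_self (t : (Fin 4 → ℝ) → Fin 4 → ℝ) (r : (Fin 4 → ℝ) → ℝ)
    (he : Differentiable ℝ e) (he0 : ∀ x, e x ≠ 0) (hg : Differentiable ℝ g)
    (hX : ContDiff ℝ 2 X) (hX2 : ∀ y, X y * X y = 0) (x : Fin 4 → ℝ) :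
    X x * Aop e g t r X x = -gradientForm g X X x := by
  rw [mul_Aop_of_eq_mul (w := 1) t r he he0 hg hX hX hX2 (fun y => (mul_one _).symm) x,
    Pi.one_apply, one_mul]

end KineticOperator

section AuxiliaryField

theorem smul_mul_mul_smul_mul_eq_zero {R S : Type*} [Monoid R] [CommSemiring S]
    [DistribMulAction R S] [IsScalarTower R S S] [SMulCommClass R S S] {c : S} (hc : c * c = 0)
    (a b : R) (p q : S) : (a • (c * p)) * (b • (c * q)) = 0 := by
  rw [smul_mul_smul_comm, mul_mul_mul_comm, hc, zero_mul, smul_zero]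

theorem mul_eq_neg_mul_of_eq_smul_mul_inverse {R S : Type*} [Monoid R] [CommRing S]
    [DistribMulAction R S] [SMulCommClass R S S] {a : R} {c F f X Y : S} (hF : IsUnit F)
    (hf : IsUnit f) (hX : X = a • (c * Ring.inverse F)) (hY : Y = -(a • (c * Ring.inverse f))) :
    F * X = -(f * Y) := by
  rw [hX, hY, mul_neg, neg_neg, mul_smul_comm, mul_smul_comm, mul_left_comm, mul_left_comm f,
    Ring.mul_inverse_cancel F hF, Ring.mul_inverse_cancel f hf]

theorem inverse_mul_eq_neg_inverse_mul {R : Type*} [CommRing R] {F f a : R} (hF : IsUnit F)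
    (hf : IsUnit f) (ha : (F + f) * a = 0) : Ring.inverse f * a = -(Ring.inverse F * a) := by
  linear_combination Ring.inverse F * Ring.inverse f * ha
    - Ring.inverse f * a * Ring.mul_inverse_cancel F hF
    - Ring.inverse F * a * Ring.mul_inverse_cancel f hf

theorem inverse_mul_mul_mul_eq_of_add_mul_eq_zero {R : Type*} [CommRing R] {F f Fb fb a b : R}
    (hF : IsUnit F) (hf : IsUnit f) (hFb : IsUnit Fb) (hfb : IsUnit fb) (hb : (F + f) * b = 0)
    (ha : (Fb + fb) * a = 0) :
    Ring.inverse (f * fb) * a * b = Ring.inverse F * Ring.inverse Fb * a * b := by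
  rw [Ring.mul_inverse_rev]
  linear_combination Ring.inverse fb * a * inverse_mul_eq_neg_inverse_mul hF hf hb
    - Ring.inverse F * b * inverse_mul_eq_neg_inverse_mul hFb hfb ha

theorem eq_mul_neg_inverse_mul {R : Type*} [CommRing R] {F f X Y : R} (hf : IsUnit f)
    (hXY : F * X = -(f * Y)) : Y = X * -(Ring.inverse f * F) := by
  linear_combination -Y * Ring.mul_inverse_cancel f hf + Ring.inverse f * hXY

theorem neg_inverse_mul_mul {R : Type*} [CommRing R] {F f a : R} (hf : IsUnit f)
    (ha : (F + f) * a = 0) : -(Ring.inverse f * F) * a = a := by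
  linear_combination -Ring.inverse f * ha + a * Ring.mul_inverse_cancel f hf

theorem add_mul_eq_zero_of_auxiliary_eom {R : Type*} [CommRing R] {F f Xb b G Z : R}
    (heom : F + f = Xb * b * G) (hZ : Xb * Z = 0) (H : R) : (F + f) * (Z * H) = 0 := by
  linear_combination Z * H * heom + b * G * H * hZ

theorem sub_eq_of_auxiliary_eom {R : Type*} [CommRing R] {F f X Y Xb b G : R} (hF : IsUnit F)
    (hf : IsUnit f) (hXb2 : Xb * Xb = 0) (hXY : F * X = -(f * Y)) (heom : F + f = Xb * b * G) :
    Y - X = Xb * (Ring.inverse F * b * (X * G)) := by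
  have hXb := inverse_mul_eq_neg_inverse_mul hF hf (a := Xb)
    (by simpa only [mul_one] using add_mul_eq_zero_of_auxiliary_eom heom hXb2 1)
  linear_combination (X - Y) * Ring.mul_inverse_cancel f hf + Ring.inverse f * hXY
    - Ring.inverse f * X * heom - b * X * G * hXb

variable {Λ : Type*} [NormedCommRing Λ] [NormedAlgebra ℂ Λ]
  {e : (Fin 4 → ℝ) → ℝ} {g : (Fin 4 → ℝ) → Fin 4 → Fin 4 → ℝ} {F f X Y u w : (Fin 4 → ℝ) → Λ}
  {x : Fin 4 → ℝ}

theorem mul_Aop_eq_mul_Aop_of_add_mul_eq_zero (t t' : (Fin 4 → ℝ) → Fin 4 → ℝ)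
    (r : (Fin 4 → ℝ) → ℝ) (he : Differentiable ℝ e) (he0 : ∀ y, e y ≠ 0) (hg : Differentiable ℝ g)
    (hX : ContDiff ℝ 2 X) (hu : ContDiff ℝ 2 u) (hX2 : ∀ y, X y * X y = 0)
    (hu_eq : ∀ y, u y = X y * w y) (hf : IsUnit (f x)) (hXY : F x * X x = -(f x * Y x))
    (hw : (F x + f x) * w x = 0) :
    Y x * Aop e g t r u x = w x * (X x * Aop e g t' r X x) := by
  have hYv := eq_mul_neg_inverse_mul hf hXY
  have hvw := neg_inverse_mul_mul hf hw
  have hAu := mul_Aop_of_eq_mul t r he he0 hg hX hu hX2 hu_eq x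
  have hAX := mul_Aop_self t' r he he0 hg hX hX2 x
  linear_combination Aop e g t r u x * hYv - Ring.inverse (f x) * F x * hAu - w x * hAX
    - gradientForm g X X x * hvw

theorem mul_Aop_add_mul_eq_of_add_mul_eq_zero (t : (Fin 4 → ℝ) → Fin 4 → ℝ)
    (r : (Fin 4 → ℝ) → ℝ) (he : Differentiable ℝ e) (he0 : ∀ y, e y ≠ 0) (hg : Differentiable ℝ g)
    (hX : ContDiff ℝ 2 X) (hY : ContDiff ℝ 2 Y) (hX2 : ∀ y, X y * X y = 0)
    (hf : ∀ y, IsUnit (f y)) (hXY : ∀ y, F y * X y = -(f y * Y y)) {a : Λ}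
    (ha : (F x + f x) * a = 0) (b : Λ) :
    Y x * (Aop e g t r Y x + b) * a = X x * (Aop e g t r X x + b) * a := by
  let v y := -(Ring.inverse (f y) * F y)
  have hYv : ∀ y, Y y = X y * v y := fun y => eq_mul_neg_inverse_mul (hf y) (hXY y)
  have hva : v x * a = a := neg_inverse_mul_mul (hf x) ha
  have hAY := mul_Aop_of_eq_mul t r he he0 hg hX hY hX2 hYv x
  have hAX := mul_Aop_self t r he he0 hg hX hX2 x
  linear_combination a * (Aop e g t r Y x + b) * hYv x + a * v x * hAY - a * hAX
    + (X x * b - (v x + 1) * gradientForm g X X x) * hva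

end AuxiliaryField

theorem nonGaussian_integration_main_general
    {Λ : Type*} [NormedCommRing Λ] [NormedAlgebra ℂ Λ]
    (c cb B Bb f fb F Fb : (Fin 4 → ℝ) → Λ)
    (t : (Fin 4 → ℝ) → Fin 4 → ℝ) (r : (Fin 4 → ℝ) → ℝ)
    (g : (Fin 4 → ℝ) → Fin 4 → Fin 4 → ℝ) (e : (Fin 4 → ℝ) → ℝ)
    (hg : Differentiable ℝ g) (he : Differentiable ℝ e) (he0 : ∀ x, e x ≠ 0)
    (hc2 : ∀ x, c x * c x = 0) (hcb2 : ∀ x, cb x * cb x = 0)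
    (hfU : ∀ x, IsUnit (f x)) (hfbU : ∀ x, IsUnit (fb x))
    (hFU : ∀ x, IsUnit (F x)) (hFbU : ∀ x, IsUnit (Fb x))
    (X Xb Y Yb : (Fin 4 → ℝ) → Λ)
    (hXC : ContDiff ℝ 2 X) (hXbC : ContDiff ℝ 2 Xb) (hYC : ContDiff ℝ 2 Y) (hYbC : ContDiff ℝ 2 Yb)
    (hX : ∀ x, X x = (2 : ℝ)⁻¹ • (c x * Ring.inverse (F x)))
    (hXb : ∀ x, Xb x = (2 : ℝ)⁻¹ • (cb x * Ring.inverse (Fb x)))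
    (hY : ∀ x, Y x = -((2 : ℝ)⁻¹ • (c x * Ring.inverse (f x))))
    (hYb : ∀ x, Yb x = -((2 : ℝ)⁻¹ • (cb x * Ring.inverse (fb x))))
    (heom : ∀ x, F x + f x = Xb x * Ring.inverse (Fb x) * (Aop e g t r X x + B x))
    (heomb : ∀ x, Fb x + fb x =
      X x * Ring.inverse (F x) * (Aop e g (fun y μ => -(t y μ)) r Xb x + Bb x)) (x : Fin 4 → ℝ) :
    (F x + f x) * (Fb x + fb x)
        + Xb x * Aop e g t r X x + X x * Bb x + B x * Xb x
      = Yb x * Aop e g t r Y x + Y x * Bb x + B x * Yb x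
        - Ring.inverse (f x * fb x) *
            (Y x * (Aop e g t r Y x + B x)) *
            (Yb x * (Aop e g (fun y μ => -(t y μ)) r Yb x + Bb x)) := by
  let tb y μ := -(t y μ)
  let N y := X y * (Aop e g t r X y + B y)
  let Nb y := Xb y * (Aop e g tb r Xb y + Bb y)
  let ω y := Ring.inverse (F y) * Ring.inverse (Fb y)
  have hX2 : ∀ y, X y * X y = 0 := fun y => hX y ▸ smul_mul_mul_smul_mul_eq_zero (hc2 y) ..
  have hXb2 : ∀ y, Xb y * Xb y = 0 := fun y => hXb y ▸ smul_mul_mul_smul_mul_eq_zero (hcb2 y) ..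
  have hXbYb : Xb x * Yb x = 0 := by
    rw [hXb, hYb, mul_neg, smul_mul_mul_smul_mul_eq_zero (hcb2 x), neg_zero]
  have hXY : ∀ y, F y * X y = -(f y * Y y) := fun y =>
    mul_eq_neg_mul_of_eq_smul_mul_inverse (hFU y) (hfU y) (hX y) (hY y)
  have hXYb : ∀ y, Fb y * Xb y = -(fb y * Yb y) := fun y =>
    mul_eq_neg_mul_of_eq_smul_mul_inverse (hFbU y) (hfbU y) (hXb y) (hYb y)
  have hFNb : (F x + f x) * Nb x = 0 := add_mul_eq_zero_of_auxiliary_eom (heom x) (hXb2 x) _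
  have hFbN : (Fb x + fb x) * N x = 0 := add_mul_eq_zero_of_auxiliary_eom (heomb x) (hX2 x) _
  have hprod : (F x + f x) * (Fb x + fb x) = ω x * N x * Nb x := by
    rw [heom, heomb]
    ring
  have hsub : ∀ y, Y y - X y = Xb y * (ω y * N y) := fun y =>
    sub_eq_of_auxiliary_eom (hFU y) (hfU y) (hXb2 y) (hXY y) (heom y)
  have hsubb : Yb x - Xb x = X x * (ω x * Nb x) := by
    rw [sub_eq_of_auxiliary_eom (hFbU x) (hfbU x) (hX2 x) (hXYb x) (heomb x),
      mul_comm (Ring.inverse (Fb x))]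
  have hkin : Yb x * Aop e g t r Y x - Yb x * Aop e g t r X x =
      ω x * N x * (Xb x * Aop e g tb r Xb x) := by
    rw [← mul_sub, ← Aop_sub t r he hg hYC hXC]
    exact mul_Aop_eq_mul_Aop_of_add_mul_eq_zero t tb r he he0 hg hXbC (hYC.sub hXC) hXb2 hsub
      (hfbU x) (hXYb x) (by rw [mul_left_comm, hFbN, mul_zero])
  have hquartic : Ring.inverse (f x * fb x) * (Y x * (Aop e g t r Y x + B x)) *
      (Yb x * (Aop e g tb r Yb x + Bb x)) = ω x * N x * Nb x := by
    have hM := mul_Aop_add_mul_eq_of_add_mul_eq_zero t r he he0 hg hXC hYC hX2 hfU hXY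
      (add_mul_eq_zero_of_auxiliary_eom (heom x) hXbYb (Aop e g tb r Yb x + Bb x)) (B x)
    have hMb := mul_Aop_add_mul_eq_of_add_mul_eq_zero tb r he he0 hg hXbC hYbC hXb2 hfbU hXYb
      hFbN (Bb x)
    linear_combination Ring.inverse (f x * fb x) * (hM + hMb) +
      inverse_mul_mul_mul_eq_of_add_mul_eq_zero (hFU x) (hfU x) (hFbU x) (hfbU x) hFNb hFbN
  linear_combination hprod + hquartic - hkin - Bb x * hsub x - (Aop e g t r X x + B x) * hsubb

/-- **Main Theorem (Sec. 4).** The Lagrangian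
`ℒ = (F+f)(F̄+f̄) + X̄ A X + X B̄ + B X̄` with the nilpotent constraint `X = χ²/(2F)`
reduces, after using the equations of motion for `F` and `F̄`, to
`ℒ = Ȳ A Y + Y B̄ + B Ȳ − |Y(AY+B)|²/(f f̄)` with `Y = −χ²/(2f)`. -/
theorem nonGaussian_integration_main
    {Λ : Type*} [NormedCommRing Λ] [NormedAlgebra ℂ Λ]
    (c cb B Bb f fb F Fb : (Fin 4 → ℝ) → Λ)
    (t : (Fin 4 → ℝ) → Fin 4 → ℝ) (r : (Fin 4 → ℝ) → ℝ)
    (g : (Fin 4 → ℝ) → Fin 4 → Fin 4 → ℝ) (e : (Fin 4 → ℝ) → ℝ)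
    -- smoothness of all data
    (hc : ContDiff ℝ (⊤ : ℕ∞) c) (hcb : ContDiff ℝ (⊤ : ℕ∞) cb)
    (hB : ContDiff ℝ (⊤ : ℕ∞) B) (hBb : ContDiff ℝ (⊤ : ℕ∞) Bb)
    (hf : ContDiff ℝ (⊤ : ℕ∞) f) (hfb : ContDiff ℝ (⊤ : ℕ∞) fb)
    (hF : ContDiff ℝ (⊤ : ℕ∞) F) (hFb : ContDiff ℝ (⊤ : ℕ∞) Fb)
    (ht : ContDiff ℝ (⊤ : ℕ∞) t) (hr : ContDiff ℝ (⊤ : ℕ∞) r)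
    (hg : ContDiff ℝ (⊤ : ℕ∞) g) (hgsym : ∀ x μ ν, g x μ ν = g x ν μ)
    (he : ContDiff ℝ (⊤ : ℕ∞) e) (he0 : ∀ x, e x ≠ 0)
    -- nilpotency of the fermion bilinears
    (hc2 : ∀ x, c x * c x = 0) (hcb2 : ∀ x, cb x * cb x = 0)
    -- invertibility
    (hfU : ∀ x, IsUnit (f x)) (hfbU : ∀ x, IsUnit (fb x))
    (hFU : ∀ x, IsUnit (F x)) (hFbU : ∀ x, IsUnit (Fb x))
    -- the constrained scalars X = c/(2F), X̄ = c̄/(2F̄), Y = -c/(2f), Ȳ = -c̄/(2f̄)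
    (X Xb Y Yb : (Fin 4 → ℝ) → Λ)
    (hX : ∀ x, X x = (2 : ℝ)⁻¹ • (c x * Ring.inverse (F x)))
    (hXb : ∀ x, Xb x = (2 : ℝ)⁻¹ • (cb x * Ring.inverse (Fb x)))
    (hY : ∀ x, Y x = -((2 : ℝ)⁻¹ • (c x * Ring.inverse (f x))))
    (hYb : ∀ x, Yb x = -((2 : ℝ)⁻¹ • (cb x * Ring.inverse (fb x))))
    -- the auxiliary-field equations of motion (4.7):
    -- F + f = X̄ F̄⁻¹ (A X + B) and F̄ + f̄ = X F⁻¹ (Ā X̄ + B̄)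
    (heom : ∀ x, F x + f x = Xb x * Ring.inverse (Fb x) * (Aop e g t r X x + B x))
    (heomb : ∀ x, Fb x + fb x =
      X x * Ring.inverse (F x) * (Aop e g (fun y μ => -(t y μ)) r Xb x + Bb x))
    :
    ∀ x, (F x + f x) * (Fb x + fb x)
        + Xb x * Aop e g t r X x + X x * Bb x + B x * Xb x
      = Yb x * Aop e g t r Y x + Y x * Bb x + B x * Yb x
        - Ring.inverse (f x * fb x) *
            (Y x * (Aop e g t r Y x + B x)) *
            (Yb x * (Aop e g (fun y μ => -(t y μ)) r Yb x + Bb x)) := by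
  have two_le : (2 : WithTop ℕ∞) ≤ (⊤ : ℕ∞) := WithTop.coe_le_coe.2 le_top
  have hXC := (contDiff_of_eq_smul_mul_inverse _ hc hF hFU hX).of_le two_le
  have hXbC := (contDiff_of_eq_smul_mul_inverse _ hcb hFb hFbU hXb).of_le two_le
  have hYC := (contDiff_of_eq_smul_mul_inverse _ hc hf hfU
    fun x => (hY x).trans (neg_smul _ _).symm).of_le two_le
  have hYbC := (contDiff_of_eq_smul_mul_inverse _ hcb hfb hfbU
    fun x => (hYb x).trans (neg_smul _ _).symm).of_le two_le
  exact nonGaussian_integration_main_general c cb B Bb f fb F Fb t r g e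
    (hg.differentiable (by simp)) (he.differentiable (by simp)) he0 hc2 hcb2 hfU hfbU hFU hFbU
    X Xb Y Yb hXC hXbC hYC hYbC hX hXb hY hYb heom heomb
end

section
/- (Rigid-supersymmetry reduction, eq. (3.13).) Under the stated rigid hypotheses, the X- and F-dependent part of the effective Lagrangian reduces pointwise to the Volkov–Akulov-type expression: (F + f)(F̄ + f) + X·(□X̄) = (1/(4f²))·c·(□c̄) − (1/(16f⁶))·c·c̄·(□c)·(□c̄) at every point of ℝ⁴. (Modulo total derivatives this is the quartic-fermion Lagrangian ℒ = −½χ̄∂̸χ − f² + (1/4f²)χ̄²□χ² − (1/16f⁶)χ²χ̄²(□χ²)(□χ̄²) obtained after eliminating the auxiliary field F, the spinor kinetic term −½χ̄∂̸χ and the constant −f² being unaffected by the reduction.) -/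
open scoped BigOperators

/-- The flat d'Alembertian `□u = η^{μν} ∂_μ ∂_ν u` with `η = diag(−1,1,1,1)`. -/
noncomputable def box {Λ : Type*} [NormedAddCommGroup Λ] [NormedSpace ℝ Λ]
    (u : (Fin 4 → ℝ) → Λ) : (Fin 4 → ℝ) → Λ :=
  fun x => ∑ μ : Fin 4, (if μ = 0 then (-1 : ℝ) else 1) • pd μ (pd μ u) x

/-!
Each equation of motion makes `F + f` a multiple of `χ̄²` and `F̄ + f` a multiple of `χ²`, so both
have square zero and the inverses are polynomial: `1 / F = -(1 / f + (F + f) / f²)`. If `c² = 0`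
and `c` divides `w` pointwise, differentiating `c * w = 0` gives `c * ∂w = 0` and
`c * ∂²w = w * ∂²c`, hence `c * □(v * w) = v * w * □c`. Expanding `X̄` with the polynomial form of
`1 / F̄` therefore gives `c * □X̄` in terms of `□c`, `□c̄` and `F̄ + f` alone, and likewise for `X`;
the rest is algebra with square-zero elements.
-/

section Algebra

lemma mul_eq_zero_of_dvd_of_dvd {M : Type*} [CommMonoidWithZero M] {a b c : M} (hcc : c * c = 0)
    (hca : c ∣ a) (hcb : c ∣ b) : a * b = 0 :=
  zero_dvd_iff.mp (hcc ▸ mul_dvd_mul hca hcb)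

variable {R : Type*} [CommRing R]

lemma eq_neg_add_of_mul_eq_one {K : Type*} [Field K] [Algebra K R] {f : K} (hf : f ≠ 0) {F G : R}
    (hFG : F * G = 1) (hnil : (F + algebraMap K R f) * (F + algebraMap K R f) = 0) :
    G = -(algebraMap K R f⁻¹ + algebraMap K R f⁻¹ ^ 2 * (F + algebraMap K R f)) := by
  have hff : algebraMap K R f * algebraMap K R f⁻¹ = 1 := by
    rw [← map_mul, mul_inv_cancel₀ hf, map_one]
  refine left_inv_eq_right_inv ((mul_comm G F).trans hFG) ?_
  linear_combination (1 + algebraMap K R f⁻¹ * (F + algebraMap K R f)) * hff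
    - algebraMap K R f⁻¹ ^ 2 * hnil

/- In the next two lemmas `A`, `Ab`, `p`, `q`, `P`, `Q` stand for `F + f`, `F̄ + f`, `□c`, `□c̄`,
`□X`, `□X̄`, where `X = c / F`, further `i` for `1 / f`, and `-(i + i ^ 2 * A)` for `1 / F`. -/

lemma mul_eq_of_reduced_eom {c cb A Ab i p q Q : R} (hcbcb : cb * cb = 0) (hcbA : cb * A = 0)
    (hAb : Ab = c * (i + i ^ 2 * A) ^ 2 * Q)
    (hQ : c * Q = -(i * (c * q) + i ^ 2 * (cb * Ab * p))) :
    cb * Ab = -(i ^ 3 * (c * cb * q)) := by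
  linear_combination cb * hAb + c * Q * (2 * i ^ 3 + i ^ 4 * A) * hcbA + i ^ 2 * cb * hQ
    - i ^ 4 * Ab * p * hcbcb

lemma lagrangian_eq_of_reduced_eom {c cb A Ab i p q P Q : R} (hcc : c * c = 0)
    (hcbcb : cb * cb = 0) (hcAb : c * Ab = 0) (hcbA : cb * A = 0)
    (hA : A = cb * (i + i ^ 2 * Ab) ^ 2 * P) (hAb : Ab = c * (i + i ^ 2 * A) ^ 2 * Q)
    (hP : cb * P = -(i * (cb * p) + i ^ 2 * (c * A * q)))
    (hQ : c * Q = -(i * (c * q) + i ^ 2 * (cb * Ab * p))) :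
    A * Ab - c * (i + i ^ 2 * A) * Q = i ^ 2 * (c * q) - i ^ 6 * (c * cb * p * q) := by
  have hcbAb : cb * Ab = -(i ^ 3 * (c * cb * q)) := mul_eq_of_reduced_eom hcbcb hcbA hAb hQ
  have hcA : c * A = -(i ^ 3 * (c * cb * p)) := by
    linear_combination mul_eq_of_reduced_eom hcc hcAb hA hP
  have hcQ : c * Q = -(i * (c * q)) + i ^ 5 * (c * cb * p * q) := by
    linear_combination hQ - i ^ 2 * p * hcbAb
  have hAAb : A * Ab = i ^ 6 * (c * cb * p * q) := by
    have hAbAb : Ab * Ab = 0 := by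
      linear_combination Ab * hAb + (i + i ^ 2 * A) ^ 2 * Q * hcAb
    linear_combination Ab * hA + cb * P * (2 * i ^ 3 + i ^ 4 * Ab) * hAbAb + i ^ 2 * P * hcbAb
      - i ^ 5 * q * c * hP + i ^ 7 * q ^ 2 * A * hcc
  have hXQ : c * (i + i ^ 2 * A) * Q = -(i ^ 2 * (c * q)) + 2 * i ^ 6 * (c * cb * p * q) := by
    linear_combination (i + i ^ 2 * A) * hcQ - i ^ 3 * q * hcA + i ^ 7 * c * p * q * hcbA
  linear_combination hAAb - hXQ

end Algebra

section Development

variable {𝕜 E Λ ι : Type*} [NontriviallyNormedField 𝕜] [NormedAddCommGroup E] [NormedSpace 𝕜 E]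
  [Fintype ι]

section Derivatives

variable [NormedAddCommGroup Λ] [NormedSpace 𝕜 Λ] {u v : E → Λ}

variable (𝕜) in
/-- The derivative `∂_v u` along a fixed vector `v`, as an operator on functions; `pd i` is the case
`v = Pi.single i 1`. -/
noncomputable def dirDeriv (v : E) (u : E → Λ) : E → Λ :=
  fun x ↦ fderiv 𝕜 u x v

/-- The constant-coefficient second-order operator `u ↦ ∑ i, η i • ∂_{e i} ∂_{e i} u`, with the
quadratic form given in diagonal shape; `box` is the case `E = ℝ⁴`, `η = diag(−1, 1, 1, 1)` and `e`
the standard basis. -/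
noncomputable def dAlembertian (η : ι → 𝕜) (e : ι → E) (u : E → Λ) : E → Λ :=
  fun x ↦ ∑ i, η i • dirDeriv 𝕜 (e i) (dirDeriv 𝕜 (e i) u) x

lemma contDiff_dirDeriv {n : WithTop ℕ∞} (hu : ContDiff 𝕜 (n + 1) u) (w : E) :
    ContDiff 𝕜 n (dirDeriv 𝕜 w u) :=
  (hu.fderiv_right le_rfl).clm_apply contDiff_const

lemma differentiable_dirDeriv (hu : ContDiff 𝕜 2 u) (w : E) :
    Differentiable 𝕜 (dirDeriv 𝕜 w u) :=
  (contDiff_dirDeriv (n := 1) (by rwa [one_add_one_eq_two]) w).differentiable one_ne_zero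

lemma dirDeriv_zero (w : E) : dirDeriv 𝕜 w (0 : E → Λ) = 0 := by
  ext x
  simp [dirDeriv]

lemma dirDeriv_add (hu : Differentiable 𝕜 u) (hv : Differentiable 𝕜 v) (w : E) :
    dirDeriv 𝕜 w (u + v) = dirDeriv 𝕜 w u + dirDeriv 𝕜 w v := by
  ext x
  simp [dirDeriv, fderiv_add (hu x) (hv x)]

lemma dirDeriv_const_smul (a : 𝕜) (u : E → Λ) (w : E) :
    dirDeriv 𝕜 w (a • u) = a • dirDeriv 𝕜 w u := by
  ext x
  simp [dirDeriv, fderiv_const_smul_field]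

lemma dAlembertian_add (η : ι → 𝕜) (e : ι → E) (hu : ContDiff 𝕜 2 u) (hv : ContDiff 𝕜 2 v) :
    dAlembertian η e (u + v) = dAlembertian η e u + dAlembertian η e v := by
  ext x
  simp [dAlembertian, dirDeriv_add (hu.differentiable two_ne_zero) (hv.differentiable two_ne_zero),
    dirDeriv_add (differentiable_dirDeriv hu _) (differentiable_dirDeriv hv _),
    Finset.sum_add_distrib]

lemma dAlembertian_const_smul (η : ι → 𝕜) (e : ι → E) (a : 𝕜) (u : E → Λ) :
    dAlembertian η e (a • u) = a • dAlembertian η e u := by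
  ext x
  simp [dAlembertian, dirDeriv_const_smul, Finset.smul_sum, smul_comm a]

end Derivatives

variable [NormedCommRing Λ] [NormedAlgebra 𝕜 Λ]

section Nilpotent

variable {c u v w : E → Λ}

lemma dirDeriv_mul (hu : Differentiable 𝕜 u) (hv : Differentiable 𝕜 v) (e : E) :
    dirDeriv 𝕜 e (u * v) = dirDeriv 𝕜 e u * v + u * dirDeriv 𝕜 e v := by
  ext x
  simp [dirDeriv, fderiv_mul (hu x) (hv x), add_comm, mul_comm]

lemma dirDeriv_dirDeriv_mul (hu : ContDiff 𝕜 2 u) (hv : ContDiff 𝕜 2 v) (e : E) :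
    dirDeriv 𝕜 e (dirDeriv 𝕜 e (u * v)) = dirDeriv 𝕜 e (dirDeriv 𝕜 e u) * v
      + 2 * (dirDeriv 𝕜 e u * dirDeriv 𝕜 e v) + u * dirDeriv 𝕜 e (dirDeriv 𝕜 e v) := by
  have hu₁ := hu.differentiable two_ne_zero
  have hv₁ := hv.differentiable two_ne_zero
  have hu₂ := differentiable_dirDeriv hu e
  have hv₂ := differentiable_dirDeriv hv e
  rw [dirDeriv_mul hu₁ hv₁, dirDeriv_add (hu₂.mul hv₁) (hu₁.mul hv₂), dirDeriv_mul hu₂ hv₁,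
    dirDeriv_mul hu₁ hv₂]
  ring

variable [NeZero (2 : 𝕜)]

lemma mul_dirDeriv_self_of_mul_self_eq_zero (hc : Differentiable 𝕜 c) (hcc : c * c = 0) (e : E) :
    c * dirDeriv 𝕜 e c = 0 := by
  have h : (2 : 𝕜) • (c * dirDeriv 𝕜 e c) = 0 := by
    have leibniz := dirDeriv_mul hc hc e
    rw [hcc, dirDeriv_zero] at leibniz
    rw [two_smul]
    linear_combination -leibniz
  exact (smul_eq_zero_iff_right two_ne_zero).mp h

lemma mul_dirDeriv_of_dvd (hc : Differentiable 𝕜 c) (hw : Differentiable 𝕜 w) (hcc : c * c = 0)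
    (hcw : c ∣ w) (e : E) : c * dirDeriv 𝕜 e w = 0 := by
  have hcw₀ : c * w = 0 := mul_eq_zero_of_dvd_of_dvd hcc dvd_rfl hcw
  obtain ⟨m, hm⟩ := hcw
  have leibniz := dirDeriv_mul hc hw e
  rw [hcw₀, dirDeriv_zero] at leibniz
  linear_combination -leibniz - dirDeriv 𝕜 e c * hm
    - m * mul_dirDeriv_self_of_mul_self_eq_zero hc hcc e

/- The quotient `w / c` need not be differentiable: differentiate `c * w = 0` twice and
`c * ∂w = 0` once, and eliminate `∂c * ∂w`. -/
lemma mul_dirDeriv_dirDeriv_of_dvd (hc : ContDiff 𝕜 2 c) (hw : ContDiff 𝕜 2 w) (hcc : c * c = 0)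
    (hcw : c ∣ w) (e : E) :
    c * dirDeriv 𝕜 e (dirDeriv 𝕜 e w) = w * dirDeriv 𝕜 e (dirDeriv 𝕜 e c) := by
  have hc₁ := hc.differentiable two_ne_zero
  have leibniz₁ := dirDeriv_mul hc₁ (differentiable_dirDeriv hw e) e
  rw [mul_dirDeriv_of_dvd hc₁ (hw.differentiable two_ne_zero) hcc hcw, dirDeriv_zero] at leibniz₁
  have hcw₀ : c * w = 0 := mul_eq_zero_of_dvd_of_dvd hcc dvd_rfl hcw
  have leibniz₂ := dirDeriv_dirDeriv_mul hc hw e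
  rw [hcw₀, dirDeriv_zero, dirDeriv_zero] at leibniz₂
  linear_combination leibniz₂ - 2 * leibniz₁

lemma mul_dAlembertian_mul_of_dvd (η : ι → 𝕜) (e : ι → E) (hc : ContDiff 𝕜 2 c)
    (hv : ContDiff 𝕜 2 v) (hw : ContDiff 𝕜 2 w) (hcc : c * c = 0) (hcw : c ∣ w) :
    c * dAlembertian η e (v * w) = v * w * dAlembertian η e c := by
  have hcw₀ : c * w = 0 := mul_eq_zero_of_dvd_of_dvd hcc dvd_rfl hcw
  have along (i : ι) : c * dirDeriv 𝕜 (e i) (dirDeriv 𝕜 (e i) (v * w))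
      = v * w * dirDeriv 𝕜 (e i) (dirDeriv 𝕜 (e i) c) := by
    have first := mul_dirDeriv_of_dvd (hc.differentiable two_ne_zero)
      (hw.differentiable two_ne_zero) hcc hcw (e i)
    have second := mul_dirDeriv_dirDeriv_of_dvd hc hw hcc hcw (e i)
    rw [dirDeriv_dirDeriv_mul hv hw]
    linear_combination dirDeriv 𝕜 (e i) (dirDeriv 𝕜 (e i) v) * hcw₀
      + 2 * dirDeriv 𝕜 (e i) v * first + v * second
  ext x
  have along_at (i : ι) := congrFun (along i) x
  simp only [Pi.mul_apply] at along_at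
  simp only [dAlembertian, Pi.mul_apply, Finset.mul_sum, mul_smul_comm, along_at]

end Nilpotent

section Reduction

variable [NeZero (2 : 𝕜)] (η : ι → 𝕜) (e : ι → E) {f : 𝕜} {c cb F Fb G Gb : E → Λ}

lemma mul_dAlembertian_mul_of_mul_eq_one (hf : f ≠ 0) (hc : ContDiff 𝕜 2 c)
    (hcb : ContDiff 𝕜 2 cb) (hFb : ContDiff 𝕜 2 Fb) (hcc : c * c = 0) (hFGb : Fb * Gb = 1)
    (hcFb : c ∣ Fb + algebraMap 𝕜 (E → Λ) f) :
    c * dAlembertian η e (cb * Gb) = -(algebraMap 𝕜 (E → Λ) f⁻¹ * (c * dAlembertian η e cb)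
      + algebraMap 𝕜 (E → Λ) f⁻¹ ^ 2
        * (cb * (Fb + algebraMap 𝕜 (E → Λ) f) * dAlembertian η e c)) := by
  set Ab := Fb + algebraMap 𝕜 (E → Λ) f
  have hAb : ContDiff 𝕜 2 Ab := hFb.add contDiff_const
  have expand : cb * Gb = (-f⁻¹) • cb + (-f⁻¹ ^ 2) • (cb * Ab) := by
    rw [eq_neg_add_of_mul_eq_one hf hFGb (mul_eq_zero_of_dvd_of_dvd hcc hcFb hcFb)]
    simp only [Algebra.smul_def, map_neg, map_pow]
    ring
  have box_expand : dAlembertian η e (cb * Gb)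
      = (-f⁻¹) • dAlembertian η e cb + (-f⁻¹ ^ 2) • dAlembertian η e (cb * Ab) := by
    rw [expand, ← dAlembertian_const_smul, ← dAlembertian_const_smul]
    exact dAlembertian_add η e (hcb.const_smul (-f⁻¹)) ((hcb.mul hAb).const_smul (-f⁻¹ ^ 2))
  simp only [box_expand, Algebra.smul_def, map_neg, map_pow]
  linear_combination -algebraMap 𝕜 (E → Λ) f⁻¹ ^ 2 *
    mul_dAlembertian_mul_of_dvd η e hc hcb hAb hcc hcFb

lemma lagrangian_eq_of_eom (hf : f ≠ 0) (hc : ContDiff 𝕜 2 c) (hcb : ContDiff 𝕜 2 cb)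
    (hF : ContDiff 𝕜 2 F) (hFb : ContDiff 𝕜 2 Fb) (hcc : c * c = 0) (hcbcb : cb * cb = 0)
    (hFG : F * G = 1) (hFGb : Fb * Gb = 1)
    (heom : F + algebraMap 𝕜 (E → Λ) f = cb * Gb * Gb * dAlembertian η e (c * G))
    (heomb : Fb + algebraMap 𝕜 (E → Λ) f = c * G * G * dAlembertian η e (cb * Gb)) :
    (F + algebraMap 𝕜 (E → Λ) f) * (Fb + algebraMap 𝕜 (E → Λ) f)
        + c * G * dAlembertian η e (cb * Gb)
      = f⁻¹ ^ 2 • (c * dAlembertian η e cb)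
        - f⁻¹ ^ 6 • (c * cb * dAlembertian η e c * dAlembertian η e cb) := by
  have hcbF : cb ∣ F + algebraMap 𝕜 (E → Λ) f := by simp [heom, mul_assoc]
  have hcFb : c ∣ Fb + algebraMap 𝕜 (E → Λ) f := by simp [heomb, mul_assoc]
  have hP := mul_dAlembertian_mul_of_mul_eq_one η e hf hcb hc hF hcbcb hFG hcbF
  have hQ := mul_dAlembertian_mul_of_mul_eq_one η e hf hc hcb hFb hcc hFGb hcFb
  have hG := eq_neg_add_of_mul_eq_one hf hFG (mul_eq_zero_of_dvd_of_dvd hcbcb hcbF hcbF)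
  have hGb := eq_neg_add_of_mul_eq_one hf hFGb (mul_eq_zero_of_dvd_of_dvd hcc hcFb hcFb)
  have reduced := lagrangian_eq_of_reduced_eom hcc hcbcb
    (mul_eq_zero_of_dvd_of_dvd hcc dvd_rfl hcFb)
    (mul_eq_zero_of_dvd_of_dvd hcbcb dvd_rfl hcbF)
    (by rw [← neg_sq, ← hGb, heom]; ring) (by rw [← neg_sq, ← hG, heomb]; ring) hP hQ
  simp only [Algebra.smul_def, map_pow]
  linear_combination reduced + c * dAlembertian η e (cb * Gb) * hG

theorem rigid_reduction_general (f : 𝕜) (hf0 : f ≠ 0)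
    (c cb F Fb : E → Λ) (hc : ContDiff 𝕜 2 c) (hcb : ContDiff 𝕜 2 cb)
    (hF : ContDiff 𝕜 2 F) (hFb : ContDiff 𝕜 2 Fb)
    (hc2 : ∀ x, c x * c x = 0) (hcb2 : ∀ x, cb x * cb x = 0)
    (hFU : ∀ x, IsUnit (F x)) (hFbU : ∀ x, IsUnit (Fb x)) (X Xb : E → Λ)
    (hX : ∀ x, X x = (2 : 𝕜)⁻¹ • (c x * Ring.inverse (F x)))
    (hXb : ∀ x, Xb x = (2 : 𝕜)⁻¹ • (cb x * Ring.inverse (Fb x)))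
    (heom : ∀ x, F x + algebraMap 𝕜 Λ f
      = Xb x * Ring.inverse (Fb x) * dAlembertian η e X x)
    (heomb : ∀ x, Fb x + algebraMap 𝕜 Λ f
      = X x * Ring.inverse (F x) * dAlembertian η e Xb x) (x : E) :
    (F x + algebraMap 𝕜 Λ f) * (Fb x + algebraMap 𝕜 Λ f) + X x * dAlembertian η e Xb x
      = (4 * f ^ 2)⁻¹ • (c x * dAlembertian η e cb x)
        - (16 * f ^ 6)⁻¹ • (c x * cb x * dAlembertian η e c x * dAlembertian η e cb x) := by
  have hX_half : X = ((2 : 𝕜)⁻¹ • c) * (Ring.inverse ∘ F) := by ext y; simp [hX]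
  have hXb_half : Xb = ((2 : 𝕜)⁻¹ • cb) * (Ring.inverse ∘ Fb) := by ext y; simp [hXb]
  have reduction := lagrangian_eq_of_eom η e (c := (2 : 𝕜)⁻¹ • c) (cb := (2 : 𝕜)⁻¹ • cb)
    (G := Ring.inverse ∘ F) (Gb := Ring.inverse ∘ Fb) hf0 (hc.const_smul (2 : 𝕜)⁻¹)
    (hcb.const_smul (2 : 𝕜)⁻¹) hF hFb (by ext y; simp [hc2]) (by ext y; simp [hcb2])
    (funext fun y ↦ Ring.mul_inverse_cancel _ (hFU y))
    (funext fun y ↦ Ring.mul_inverse_cancel _ (hFbU y))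
    (by rw [← hX_half, ← hXb_half]; exact funext heom)
    (by rw [← hX_half, ← hXb_half]; exact funext heomb)
  rw [← hX_half, ← hXb_half, dAlembertian_const_smul, dAlembertian_const_smul] at reduction
  refine (congrFun reduction x).trans ?_
  have four_eq : (4 : 𝕜) = 2 ^ 2 := by norm_num
  have sixteen_eq : (16 : 𝕜) = 2 ^ 4 := by norm_num
  simp only [Pi.sub_apply, Pi.smul_apply, Pi.mul_apply, smul_mul_smul_comm, smul_smul, four_eq,
    sixteen_eq]
  congr 2 <;> field_simp

end Reduction

end Development

/-- **Rigid-supersymmetry reduction, eq. (3.13).** After eliminating the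
auxiliary field, the `X`- and `F`-dependent part of the Lagrangian reduces to
the Volkov–Akulov-type expression
`(F+f)(F̄+f) + X □X̄ = (1/4f²) χ² □χ̄² − (1/16f⁶) χ² χ̄² (□χ²)(□χ̄²)`. -/
theorem rigid_reduction
    {Λ : Type*} [NormedCommRing Λ] [NormedAlgebra ℝ Λ]
    (f : ℝ) (hf0 : f ≠ 0)
    (c cb F Fb : (Fin 4 → ℝ) → Λ)
    (hc : ContDiff ℝ (⊤ : ℕ∞) c) (hcb : ContDiff ℝ (⊤ : ℕ∞) cb)
    (hF : ContDiff ℝ (⊤ : ℕ∞) F) (hFb : ContDiff ℝ (⊤ : ℕ∞) Fb)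
    -- nilpotency of the fermion bilinears χ², χ̄²
    (hc2 : ∀ x, c x * c x = 0) (hcb2 : ∀ x, cb x * cb x = 0)
    -- invertibility of the auxiliary fields
    (hFU : ∀ x, IsUnit (F x)) (hFbU : ∀ x, IsUnit (Fb x))
    -- the constrained scalars X = χ²/(2F), X̄ = χ̄²/(2F̄)
    (X Xb : (Fin 4 → ℝ) → Λ)
    (hX : ∀ x, X x = (2 : ℝ)⁻¹ • (c x * Ring.inverse (F x)))
    (hXb : ∀ x, Xb x = (2 : ℝ)⁻¹ • (cb x * Ring.inverse (Fb x)))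
    -- the auxiliary-field equations of motion:
    -- F + f = X̄ F̄⁻¹ (□X) and F̄ + f = X F⁻¹ (□X̄)
    (heom : ∀ x, F x + algebraMap ℝ Λ f = Xb x * Ring.inverse (Fb x) * box X x)
    (heomb : ∀ x, Fb x + algebraMap ℝ Λ f = X x * Ring.inverse (F x) * box Xb x)
    :
    ∀ x, (F x + algebraMap ℝ Λ f) * (Fb x + algebraMap ℝ Λ f) + X x * box Xb x
      = (4 * f ^ 2)⁻¹ • (c x * box cb x)
        - (16 * f ^ 6)⁻¹ • (c x * cb x * box c x * box cb x) :=
  rigid_reduction_general (fun μ : Fin 4 ↦ if μ = 0 then (-1 : ℝ) else 1)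
    (fun μ ↦ Pi.single μ 1) f hf0 c cb F Fb (contDiff_infty.mp hc 2) (contDiff_infty.mp hcb 2)
    (contDiff_infty.mp hF 2) (contDiff_infty.mp hFb 2) hc2 hcb2 hFU hFbU X Xb hX hXb heom heomb
end

section
/- (Explicit solution for the auxiliary field, eq. (4.22).) Under the stated hypotheses, the auxiliary field is given by the closed-form expression F = −f · [1 + 𝒜 · (1 − 3·𝒜̄ − c·(2 f² f̄)⁻¹·B̄)] pointwise on ℝ⁴, where 𝒜 := (f f̄)⁻¹ Ȳ (A Y + B) and 𝒜̄ := (f f̄)⁻¹ Y (Ā Ȳ + B̄). -/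
open scoped BigOperators

/-!
With `c` eliminated, the constraints read `F X = -f Y`, `Y² = 0`, and likewise for the barred
fields. The equations of motion put `F + f` in the ideal generated by `Ȳ` and `F̄ + f̄` in the one
generated by `Y`; hence `F` may be replaced by `-f`, and `X` by `Y`, in any multiple of `Ȳ`, and
likewise for the barred fields in any multiple of `Y`.

The derivatives are controlled by one fact: if `c² = 0` and `c` divides `u`, then `c Du = 0` and
`c D²u = u D²c`, so that `c (A u)` is `u` times the principal part of `A` evaluated on `D²c`. Since
`A` and `Ā` have the same principal part, applying this to `X - Y`, a multiple of `Ȳ`, turns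
`Ȳ (A X - A Y)` into a multiple of `Ȳ (Ā X̄)`. Substituting in the first equation of motion, the
expansion stops after the terms linear in `Y`, because `Y² = 0`.
-/

section UnitInverse

open UniformSpace

/-- The units of a normed ring, viewed as units of its completion. -/
noncomputable def unitsToCompletion (Λ : Type*) [NormedRing Λ] : Λˣ →* (Completion Λ)ˣ :=
  Units.map (Completion.coeRingHom : Λ →+* Completion Λ)

theorem ringInverse_coe_completion {Λ : Type*} [NormedRing Λ] (u : Λˣ) :
    Ring.inverse ((u : Λ) : Completion Λ) = ((↑u⁻¹ : Λ) : Completion Λ) :=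
  Ring.inverse_unit (unitsToCompletion Λ u)

-- `Λ` is not assumed complete, so `Ring.inverse` need not be continuous on it; continuity and
-- differentiability along a family of units are pulled back from the completion.
theorem continuousAt_units_inv {X Λ : Type*} [TopologicalSpace X] [NormedRing Λ] {F : X → Λˣ}
    {x : X} (hF : ContinuousAt (fun y ↦ (F y : Λ)) x) :
    ContinuousAt (fun y ↦ (↑(F y)⁻¹ : Λ)) x := by
  rw [(Completion.isUniformInducing_coe Λ).isInducing.continuousAt_iff]
  have hinv : ContinuousAt Ring.inverse ((F x : Λ) : Completion Λ) :=
    NormedRing.inverse_continuousAt (unitsToCompletion Λ (F x))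
  convert ContinuousAt.comp (f := fun y ↦ ((F y : Λ) : Completion Λ)) hinv
    ((Completion.continuous_coe Λ).continuousAt.comp hF) using 1
  exact funext fun y ↦ (ringInverse_coe_completion (F y)).symm

variable {𝕜 E Λ : Type*} [NontriviallyNormedField 𝕜] [NormedAddCommGroup E] [NormedSpace 𝕜 E]
  [NormedCommRing Λ] [NormedAlgebra 𝕜 Λ]

theorem hasFDerivAt_units_inv {F : E → Λˣ} {F' : E →L[𝕜] Λ} {x : E}
    (hF : HasFDerivAt (fun y ↦ (F y : Λ)) F' x) :
    HasFDerivAt (fun y ↦ (↑(F y)⁻¹ : Λ))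
      (-ContinuousLinearMap.mulLeftRight 𝕜 Λ ↑(F x)⁻¹ ↑(F x)⁻¹ ∘L F') x := by
  have hcoe (v : Λ) : HasFDerivAt (fun v : Λ ↦ (v : Completion Λ))
      (Completion.toComplL (𝕜 := 𝕜)) v :=
    Completion.toComplL.hasFDerivAt
  have hinv : HasFDerivAt Ring.inverse _ ((F x : Λ) : Completion Λ) :=
    hasFDerivAt_ringInverse (𝕜 := 𝕜) (unitsToCompletion Λ (F x))
  refine (hcoe _).of_comp_of_isEmbedding (continuousAt_units_inv hF.continuousAt)
    (Completion.isUniformEmbedding_coe Λ).isEmbedding ?_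
    (.of_forall fun y ↦ (ringInverse_coe_completion (F y)).symm)
  refine (hinv.comp x ((hcoe _).comp x hF)).congr_fderiv ?_
  ext v
  simp only [ContinuousLinearMap.neg_comp, neg_apply, ContinuousLinearMap.comp_apply,
    Completion.coe_toComplL, ContinuousLinearMap.mulLeftRight_apply, ContinuousLinearMap.comp_neg,
    Completion.coe_mul, neg_inj]
  rfl

theorem contDiff_ringInverse {F : E → Λ} {n : ℕ∞} (hF : ContDiff 𝕜 n F) (hU : ∀ x, IsUnit (F x)) :
    ContDiff 𝕜 n fun x ↦ Ring.inverse (F x) := by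
  choose U hU using hU
  obtain rfl : (fun x ↦ (U x : Λ)) = F := funext hU
  simp only [Ring.inverse_unit]
  refine contDiff_iff_forall_nat_le.2 fun m hm ↦ ?_
  replace hF : ContDiff 𝕜 m fun x ↦ (U x : Λ) := hF.of_le (mod_cast hm)
  clear hm
  induction m with
  | zero =>
    exact contDiff_zero.2 <| continuous_iff_continuousAt.2 fun _ ↦
      continuousAt_units_inv hF.continuous.continuousAt
  | succ m ih =>
    obtain ⟨F', hF', hderiv⟩ := contDiff_succ_iff_hasFDerivAt.1 hF
    have hinv := ih (hF.of_le (mod_cast m.le_succ))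
    refine contDiff_succ_iff_hasFDerivAt.2 ⟨_, ?_, fun x ↦ hasFDerivAt_units_inv (hderiv x)⟩
    exact (((ContinuousLinearMap.mulLeftRight 𝕜 Λ).contDiff.comp hinv).clm_apply hinv).neg.clm_comp
      hF'

end UnitInverse

section PrincipalPart

theorem differentiable_fderiv {𝕜 E V : Type*} [NontriviallyNormedField 𝕜] [NormedAddCommGroup E]
    [NormedSpace 𝕜 E] [NormedAddCommGroup V] [NormedSpace 𝕜 V] {u : E → V} (hu : ContDiff 𝕜 2 u) :
    Differentiable 𝕜 (fderiv 𝕜 u) :=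
  (hu.fderiv_right (m := 1) le_rfl).differentiable one_ne_zero

theorem mul_eq_zero_of_mul_self_of_dvd {R : Type*} [CommSemiring R] {c u : R} (hc : c * c = 0)
    (h : c ∣ u) : c * u = 0 :=
  zero_dvd_iff.1 (hc ▸ mul_dvd_mul_left c h)

variable {𝕜 E Λ : Type*} [RCLike 𝕜] [NormedAddCommGroup E] [NormedSpace 𝕜 E] [NormedCommRing Λ]
  [NormedAlgebra 𝕜 Λ]

theorem smul_fderiv_self_eq_zero {c : E → Λ} (hc : Differentiable 𝕜 c) (hc2 : ∀ x, c x * c x = 0)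
    (x : E) : c x • fderiv 𝕜 c x = 0 := by
  have h : c x • fderiv 𝕜 c x + c x • fderiv 𝕜 c x = 0 := by
    rw [← fderiv_fun_mul (hc x) (hc x)]
    simp only [hc2, fderiv_fun_const, Pi.zero_apply]
  rw [← two_smul 𝕜] at h
  exact (smul_eq_zero.1 h).resolve_left two_ne_zero

theorem smul_fderiv_divisor_eq_zero {c u : E → Λ} (hc : Differentiable 𝕜 c)
    (hc2 : ∀ x, c x * c x = 0) (hdvd : ∀ x, c x ∣ u x) (x : E) : u x • fderiv 𝕜 c x = 0 := by
  obtain ⟨v, hv⟩ := hdvd x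
  rw [hv, mul_comm, mul_smul, smul_fderiv_self_eq_zero hc hc2]
  exact smul_zero (A := E →L[𝕜] Λ) v

theorem smul_fderiv_multiple_eq_zero {c u : E → Λ} (hc : Differentiable 𝕜 c)
    (hu : Differentiable 𝕜 u) (hc2 : ∀ x, c x * c x = 0) (hdvd : ∀ x, c x ∣ u x) (x : E) :
    c x • fderiv 𝕜 u x = 0 := by
  have hcu (y : E) : c y * u y = 0 := mul_eq_zero_of_mul_self_of_dvd (hc2 y) (hdvd y)
  have h : c x • fderiv 𝕜 u x + u x • fderiv 𝕜 c x = 0 := by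
    rw [← fderiv_fun_mul (hc x) (hu x)]
    simp only [hcu, fderiv_fun_const, Pi.zero_apply]
  rwa [smul_fderiv_divisor_eq_zero hc hc2 hdvd, add_zero] at h

theorem mul_fderiv_fderiv_apply {a b : E → Λ} (ha : Differentiable 𝕜 a)
    (hb : ContDiff 𝕜 2 b) (h : ∀ x, a x • fderiv 𝕜 b x = 0) (x v w : E) :
    a x * fderiv 𝕜 (fderiv 𝕜 b) x v w = -(fderiv 𝕜 a x v * fderiv 𝕜 b x w) := by
  have hDb := (differentiable_fderiv hb x).hasFDerivAt
  have hprod := (ha x).hasFDerivAt.mul (hDb.clm_apply (hasFDerivAt_const w x))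
  have hzero : (fun y ↦ a y * fderiv 𝕜 b y w) = fun _ ↦ 0 :=
    funext fun y ↦ DFunLike.congr_fun (h y) w
  have hsum := DFunLike.congr_fun (hprod.unique (hzero ▸ hasFDerivAt_const 0 x)) v
  simp only [ContinuousLinearMap.comp_zero, zero_add, add_apply, smul_apply,
    ContinuousLinearMap.flip_apply, smul_eq_mul, zero_apply] at hsum
  linear_combination hsum

theorem smul_fderiv_fderiv_comm_of_dvd {c u : E → Λ} (hc : ContDiff 𝕜 2 c) (hu : ContDiff 𝕜 2 u)
    (hc2 : ∀ x, c x * c x = 0) (hdvd : ∀ x, c x ∣ u x) (x : E) :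
    c x • fderiv 𝕜 (fderiv 𝕜 u) x = u x • fderiv 𝕜 (fderiv 𝕜 c) x := by
  have hc' := hc.differentiable two_ne_zero
  have hu' := hu.differentiable two_ne_zero
  ext v w
  have hsymm : fderiv 𝕜 (fderiv 𝕜 c) x v w = fderiv 𝕜 (fderiv 𝕜 c) x w v :=
    hc.contDiffAt.isSymmSndFDerivAt minSmoothness_of_isRCLikeNormedField.le v w
  simp only [smul_apply, smul_eq_mul]
  rw [hsymm, mul_fderiv_fderiv_apply hc' hu (smul_fderiv_multiple_eq_zero hc' hu' hc2 hdvd),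
    mul_fderiv_fderiv_apply hu' hc (smul_fderiv_divisor_eq_zero hc' hc2 hdvd), mul_comm]

/-- `A` is a linear differential operator of order at most two with principal part `P`: on `C²`
functions, `A u = P (D²u) + (a first-order term in u)`. The coefficients may have arbitrary
regularity. -/
def HasPrincipalPart (A : (E → Λ) → E → Λ) (P : E → (E →L[𝕜] E →L[𝕜] Λ) →ₗ[Λ] Λ) : Prop :=
  ∃ (a : E → (E →L[𝕜] Λ) →ₗ[Λ] Λ) (q : E → Λ), ∀ u, ContDiff 𝕜 2 u → ∀ x,
    A u x = P x (fderiv 𝕜 (fderiv 𝕜 u) x) + a x (fderiv 𝕜 u x) + q x * u x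

namespace HasPrincipalPart

variable {A : (E → Λ) → E → Λ} {P : E → (E →L[𝕜] E →L[𝕜] Λ) →ₗ[Λ] Λ}

theorem apply_sub (hA : HasPrincipalPart A P) {u v : E → Λ} (hu : ContDiff 𝕜 2 u)
    (hv : ContDiff 𝕜 2 v) (x : E) : A (fun y ↦ u y - v y) x = A u x - A v x := by
  obtain ⟨a, q, hA⟩ := hA
  have hfderiv : fderiv 𝕜 (fun y ↦ u y - v y) = fun y ↦ fderiv 𝕜 u y - fderiv 𝕜 v y :=
    funext fun y ↦
      fderiv_fun_sub (hu.differentiable two_ne_zero y) (hv.differentiable two_ne_zero y)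
  rw [hA _ (hu.sub hv), hA u hu, hA v hv, hfderiv,
    fderiv_fun_sub (differentiable_fderiv hu x) (differentiable_fderiv hv x)]
  have hP := map_sub (P x) (fderiv 𝕜 (fderiv 𝕜 u) x) (fderiv 𝕜 (fderiv 𝕜 v) x)
  have ha := map_sub (a x) (fderiv 𝕜 u x) (fderiv 𝕜 v x)
  linear_combination hP + ha

theorem mul_apply_of_dvd (hA : HasPrincipalPart A P) {c u : E → Λ} (hc : ContDiff 𝕜 2 c)
    (hu : ContDiff 𝕜 2 u) (hc2 : ∀ x, c x * c x = 0) (hdvd : ∀ x, c x ∣ u x) (x : E) :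
    c x * A u x = u x * P x (fderiv 𝕜 (fderiv 𝕜 c) x) := by
  obtain ⟨a, q, hA⟩ := hA
  have hcu : c x * u x = 0 := mul_eq_zero_of_mul_self_of_dvd (hc2 x) (hdvd x)
  have hDu : c x • fderiv 𝕜 u x = 0 := smul_fderiv_multiple_eq_zero (hc.differentiable two_ne_zero)
    (hu.differentiable two_ne_zero) hc2 hdvd x
  calc c x * A u x
      = P x (c x • fderiv 𝕜 (fderiv 𝕜 u) x) + a x (c x • fderiv 𝕜 u x) + q x * (c x * u x) := by
        rw [hA u hu, map_smul, map_smul, smul_eq_mul, smul_eq_mul]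
        ring
    _ = u x * P x (fderiv 𝕜 (fderiv 𝕜 c) x) := by
        rw [smul_fderiv_fderiv_comm_of_dvd hc hu hc2 hdvd, hDu, hcu, map_smul, map_zero, mul_zero,
          add_zero, add_zero, smul_eq_mul]

theorem mul_mul_apply_congr (hA : HasPrincipalPart A P) {c u : E → Λ} (hc : ContDiff 𝕜 2 c)
    (hu : ContDiff 𝕜 2 u) (hc2 : ∀ x, c x * c x = 0) (hdvd : ∀ x, c x ∣ u x) {x : E} {z : Λ}
    (hz : z * u x = z * c x) : z * c x * A u x = z * c x * A c x := by
  rw [mul_assoc, mul_assoc, hA.mul_apply_of_dvd hc hu hc2 hdvd,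
    hA.mul_apply_of_dvd hc hc hc2 fun _ ↦ dvd_rfl, ← mul_assoc, ← mul_assoc, hz]

end HasPrincipalPart

end PrincipalPart

section AuxiliaryField

variable {𝕜 E Λ : Type*} [RCLike 𝕜] [NormedAddCommGroup E] [NormedSpace 𝕜 E] [NormedCommRing Λ]
  [NormedAlgebra 𝕜 Λ]

/-- The constrained scalars `X = c / (2F)` and `Y = -c / (2f)` of one chirality, with `c`
eliminated: `F X = -f Y` and `Y² = 0`. The functions `i` and `I` are the inverses of `f` and `F`. -/
structure ConstrainedScalars (𝕜 : Type*) {E Λ : Type*} [RCLike 𝕜] [NormedAddCommGroup E]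
    [NormedSpace 𝕜 E] [NormedCommRing Λ] [NormedAlgebra 𝕜 Λ] (f i F I X Y : E → Λ) : Prop where
  contDiff_X : ContDiff 𝕜 2 X
  contDiff_Y : ContDiff 𝕜 2 Y
  Y_mul_Y (x : E) : Y x * Y x = 0
  f_mul_i (x : E) : f x * i x = 1
  F_mul_I (x : E) : F x * I x = 1
  F_mul_X (x : E) : F x * X x = -(f x * Y x)

namespace ConstrainedScalars

variable {f i F I X Y fb j Fb J Xb Yb B Bb : E → Λ} {A Ab : (E → Λ) → E → Λ}
  {P : E → (E →L[𝕜] E →L[𝕜] Λ) →ₗ[Λ] Λ}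

theorem Y_dvd_X (h : ConstrainedScalars 𝕜 f i F I X Y) (x : E) : Y x ∣ X x :=
  ⟨-(f x * I x), by linear_combination I x * h.F_mul_X x - X x * h.F_mul_I x⟩

theorem X_sub_Y (h : ConstrainedScalars 𝕜 f i F I X Y) (x : E) :
    X x - Y x = -(Y x * I x * (F x + f x)) := by
  linear_combination I x * h.F_mul_X x + (Y x - X x) * h.F_mul_I x

theorem mul_X_eq_mul_Y (h : ConstrainedScalars 𝕜 f i F I X Y) {x : E} {z : Λ}
    (hz : z * (F x + f x) = 0) : z * X x = z * Y x := by
  linear_combination z * h.X_sub_Y x - Y x * I x * hz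

theorem mul_I_eq (h : ConstrainedScalars 𝕜 f i F I X Y) {x : E} {z n : Λ} (hn : n * n = 0)
    (hz : z * (F x + f x) = -(z * f x * n)) : z * I x = -(z * i x * (1 - n)) := by
  linear_combination I x * i x * (1 - n) * hz - z * i x * (1 - n) * h.F_mul_I x
    - z * I x * h.f_mul_i x + z * I x * (f x * i x) * hn

theorem mul_I_eq_neg (h : ConstrainedScalars 𝕜 f i F I X Y) {x : E} {z : Λ}
    (hz : z * (F x + f x) = 0) : z * I x = -(z * i x) := by
  simpa using h.mul_I_eq (mul_zero 0) (by simpa using hz)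

theorem mul_mul_apply_X (h : ConstrainedScalars 𝕜 f i F I X Y) (hA : HasPrincipalPart A P) {x : E}
    {z : Λ} (hz : z * (F x + f x) = 0) : z * Y x * A X x = z * Y x * A Y x :=
  hA.mul_mul_apply_congr h.contDiff_Y h.contDiff_X h.Y_mul_Y h.Y_dvd_X
    (h.mul_X_eq_mul_Y hz)

theorem Y_mul_eq_zero (h : ConstrainedScalars 𝕜 f i F I X Y) {x : E} {u w : Λ}
    (hu : u = X x * w) : Y x * u = 0 :=
  mul_eq_zero_of_mul_self_of_dvd (h.Y_mul_Y x) (hu ▸ (h.Y_dvd_X x).mul_right w)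

theorem mul_apply_sub (h : ConstrainedScalars 𝕜 f i F I X Y)
    (hb : ConstrainedScalars 𝕜 fb j Fb J Xb Yb) (hA : HasPrincipalPart A P)
    (hAb : HasPrincipalPart Ab P) (heom : ∀ x, F x + f x = Xb x * J x * (A X x + B x)) (x : E) :
    Yb x * (A X x - A Y x) = -(Y x * I x * J x * (A X x + B x) * (Yb x * Ab Xb x)) := by
  have hsub (y : E) : X y - Y y = Xb y * -(Y y * I y * J y * (A X y + B y)) := by
    rw [h.X_sub_Y, heom]
    ring
  have hdvd (y : E) : Yb y ∣ X y - Y y :=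
    hsub y ▸ (hb.Y_dvd_X y).mul_right _
  rw [← hA.apply_sub h.contDiff_X h.contDiff_Y,
    hA.mul_apply_of_dvd hb.contDiff_Y (h.contDiff_X.sub h.contDiff_Y) hb.Y_mul_Y hdvd,
    hsub, hAb.mul_apply_of_dvd hb.contDiff_Y hb.contDiff_X hb.Y_mul_Y hb.Y_dvd_X]
  ring

theorem mul_apply_add (h : ConstrainedScalars 𝕜 f i F I X Y)
    (hb : ConstrainedScalars 𝕜 fb j Fb J Xb Yb) (hA : HasPrincipalPart A P)
    (hAb : HasPrincipalPart Ab P) (heom : ∀ x, F x + f x = Xb x * J x * (A X x + B x)) {x : E}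
    (hYb : Yb x * (F x + f x) = 0) (hY : Y x * (Fb x + fb x) = 0) :
    Yb x * (A X x + B x) = Yb x * (A Y x + B x) * (1 - i x * j x * (Y x * Ab Yb x)) := by
  linear_combination h.mul_apply_sub hb hA hAb heom x
    - Y x * J x * (A X x + B x) * Ab Xb x * h.mul_I_eq_neg hYb
    + i x * Yb x * (A X x + B x) * Ab Xb x * hb.mul_I_eq_neg hY
    - i x * j x * Ab Xb x * h.mul_mul_apply_X hA hYb
    - i x * j x * (A Y x + B x) * hb.mul_mul_apply_X hAb hY

theorem mul_Y_mul_mul_Y (h : ConstrainedScalars 𝕜 f i F I X Y) (x : E) (k a b : Λ) :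
    k * (Y x * a) * (k * (Y x * b)) = 0 := by
  linear_combination k * k * a * b * h.Y_mul_Y x

theorem Yb_mul_J (h : ConstrainedScalars 𝕜 f i F I X Y)
    (hb : ConstrainedScalars 𝕜 fb j Fb J Xb Yb) (hAb : HasPrincipalPart Ab P) {x : E}
    (heomb : Fb x + fb x = X x * I x * (Ab Xb x + Bb x))
    (hYb : Yb x * (F x + f x) = 0) (hY : Y x * (Fb x + fb x) = 0) :
    Yb x * J x = -(Yb x * j x * (1 - i x * j x * (Y x * (Ab Yb x + Bb x)))) := by
  refine hb.mul_I_eq (h.mul_Y_mul_mul_Y x _ _ _) ?_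
  linear_combination Yb x * heomb + I x * (Ab Xb x + Bb x) * h.mul_X_eq_mul_Y hYb
    + Y x * (Ab Xb x + Bb x) * h.mul_I_eq_neg hYb - i x * hb.mul_mul_apply_X hAb hY
    + i x * Yb x * Y x * (Ab Yb x + Bb x) * hb.f_mul_i x

theorem auxiliaryField_eq (h : ConstrainedScalars 𝕜 f i F I X Y)
    (hb : ConstrainedScalars 𝕜 fb j Fb J Xb Yb) (hA : HasPrincipalPart A P)
    (hAb : HasPrincipalPart Ab P) (heom : ∀ x, F x + f x = Xb x * J x * (A X x + B x)) {x : E}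
    (heomb : Fb x + fb x = X x * I x * (Ab Xb x + Bb x)) :
    F x = -f x * (1 + i x * j x * (Yb x * (A Y x + B x)) *
      (1 - 3 * (i x * j x * (Y x * (Ab Yb x + Bb x))) + i x * j x * (Y x * Bb x))) := by
  have hYb : Yb x * (F x + f x) = 0 := hb.Y_mul_eq_zero ((heom x).trans (mul_assoc _ _ _))
  have hY : Y x * (Fb x + fb x) = 0 := h.Y_mul_eq_zero (heomb.trans (mul_assoc _ _ _))
  have hD := h.mul_apply_add hb hA hAb heom hYb hY
  have hJ := h.Yb_mul_J hb hAb heomb hYb hY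
  set D := A Y x + B x
  set n := i x * j x * (Y x * (Ab Yb x + Bb x)) with hn
  set m := i x * j x * (Y x * Ab Yb x) with hm
  have hnn : n * n = 0 := h.mul_Y_mul_mul_Y x _ _ _
  have hnm : n * m = 0 := h.mul_Y_mul_mul_Y x _ _ _
  have hXbJ : Xb x * J x = -(j x * (1 - 2 * n) * Yb x) := by
    linear_combination J x * J x * hb.F_mul_X x - Xb x * J x * hb.F_mul_I x
      - J x * fb x * hJ + J x * Yb x * (1 - n) * hb.f_mul_i x + (1 - n) * hJ - j x * Yb x * hnn
  have hF : F x = -f x * (1 + i x * j x * (Yb x * D) * (1 - 2 * n - m)) := by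
    linear_combination heom x + (A X x + B x) * hXbJ - j x * (1 - 2 * n) * hD
      - 2 * j x * Yb x * D * hnm + j x * Yb x * D * (1 - 2 * n - m) * h.f_mul_i x
  rw [hF, hn, hm]
  ring

end ConstrainedScalars

theorem constrainedScalars_of_inverse {c f F X Y : E → Λ} (hc : ContDiff 𝕜 2 c)
    (hf : ContDiff 𝕜 2 f) (hF : ContDiff 𝕜 2 F) (hc2 : ∀ x, c x * c x = 0)
    (hfU : ∀ x, IsUnit (f x)) (hFU : ∀ x, IsUnit (F x))
    (hX : ∀ x, X x = (2 : 𝕜)⁻¹ • (c x * Ring.inverse (F x)))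
    (hY : ∀ x, Y x = -((2 : 𝕜)⁻¹ • (c x * Ring.inverse (f x)))) :
    ConstrainedScalars 𝕜 f (fun x ↦ Ring.inverse (f x)) F (fun x ↦ Ring.inverse (F x)) X Y where
  contDiff_X := funext hX ▸ (hc.mul (contDiff_ringInverse hF hFU)).const_smul _
  contDiff_Y := funext hY ▸ ((hc.mul (contDiff_ringInverse hf hfU)).const_smul _).neg
  Y_mul_Y x := by
    rw [hY, neg_mul_neg, smul_mul_smul_comm, mul_mul_mul_comm, hc2, zero_mul, smul_zero]
  f_mul_i x := Ring.mul_inverse_cancel _ (hfU x)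
  F_mul_I x := Ring.mul_inverse_cancel _ (hFU x)
  F_mul_X x := by
    rw [hX, hY, mul_neg, neg_neg, mul_smul_comm, mul_smul_comm, mul_left_comm, mul_left_comm (f x),
      Ring.mul_inverse_cancel _ (hfU x), Ring.mul_inverse_cancel _ (hFU x)]

end AuxiliaryField

section PartialDerivative

variable {V : Type*} [NormedAddCommGroup V] [NormedSpace ℝ V] {u : (Fin 4 → ℝ) → V}

theorem hasFDerivAt_pd (hu : ContDiff ℝ 2 u) (ν : Fin 4) (x : Fin 4 → ℝ) :
    HasFDerivAt (pd ν u) ((fderiv ℝ (fderiv ℝ u) x).flip (Pi.single ν 1)) x := by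
  have hDu := (differentiable_fderiv hu x).hasFDerivAt
  exact (hDu.clm_apply (hasFDerivAt_const (Pi.single ν 1) x)).congr_fderiv (by simp)

theorem pd_sum_smul_pd {h : (Fin 4 → ℝ) → Fin 4 → ℝ} (hh : Differentiable ℝ h)
    (hu : ContDiff ℝ 2 u) (μ : Fin 4) (x : Fin 4 → ℝ) :
    pd μ (fun y ↦ ∑ ν, h y ν • pd ν u y) x =
      ∑ ν, h x ν • fderiv ℝ (fderiv ℝ u) x (Pi.single μ 1) (Pi.single ν 1) +
        ∑ ν, pd μ (fun y ↦ h y ν) x • fderiv ℝ u x (Pi.single ν 1) := by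
  have hsum := HasFDerivAt.fun_sum (u := Finset.univ) fun ν _ ↦
    (differentiable_pi.1 hh ν x).hasFDerivAt.smul (hasFDerivAt_pd hu ν x)
  refine (DFunLike.congr_fun hsum.fderiv (Pi.single μ 1)).trans ?_
  simp [pd, Finset.sum_add_distrib]

end PartialDerivative

section KineticOperator

variable {Λ : Type*} [NormedCommRing Λ] [NormedAlgebra ℂ Λ]

/-- The principal part `g^{μν} ∂_μ ∂_ν` of the kinetic operator, acting on second derivatives. -/
noncomputable def metricPrincipalPart (Λ : Type*) [NormedCommRing Λ] [NormedAlgebra ℝ Λ]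
    (g : (Fin 4 → ℝ) → Fin 4 → Fin 4 → ℝ) (x : Fin 4 → ℝ) :
    ((Fin 4 → ℝ) →L[ℝ] (Fin 4 → ℝ) →L[ℝ] Λ) →ₗ[Λ] Λ where
  toFun T := ∑ μ, ∑ ν, g x μ ν • T (Pi.single μ 1) (Pi.single ν 1)
  map_add' S T := by
    simp only [add_apply, smul_add, Finset.sum_add_distrib]
  map_smul' z T := by
    simp only [smul_apply, smul_comm _ z, Finset.smul_sum, RingHom.id_apply]

/-- The first-order part `(e⁻¹ ∂_μ (e g^{μν}) + i t^ν) ∂_ν` of the kinetic operator, acting on first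
derivatives. -/
noncomputable def kineticFirstOrderPart (Λ : Type*) [NormedCommRing Λ] [NormedAlgebra ℂ Λ]
    (e : (Fin 4 → ℝ) → ℝ) (g : (Fin 4 → ℝ) → Fin 4 → Fin 4 → ℝ) (t : (Fin 4 → ℝ) → Fin 4 → ℝ)
    (x : Fin 4 → ℝ) : ((Fin 4 → ℝ) →L[ℝ] Λ) →ₗ[Λ] Λ where
  toFun T := (e x)⁻¹ • ∑ μ, ∑ ν, pd μ (fun y ↦ e y * g y μ ν) x • T (Pi.single ν 1) +
    Complex.I • ∑ μ, t x μ • T (Pi.single μ 1)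
  map_add' S T := by
    simp only [add_apply, smul_add, Finset.sum_add_distrib, add_add_add_comm]
  map_smul' z T := by
    simp only [smul_apply, smul_comm _ z, Finset.smul_sum, RingHom.id_apply, smul_add]

theorem hasPrincipalPart_Aop {e : (Fin 4 → ℝ) → ℝ} {g : (Fin 4 → ℝ) → Fin 4 → Fin 4 → ℝ}
    (he : Differentiable ℝ e) (hg : Differentiable ℝ g) (he0 : ∀ x, e x ≠ 0)
    (t : (Fin 4 → ℝ) → Fin 4 → ℝ) (r : (Fin 4 → ℝ) → ℝ) :
    HasPrincipalPart (Aop (Λ := Λ) e g t r) (metricPrincipalPart Λ g) := by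
  refine ⟨kineticFirstOrderPart Λ e g t, fun x ↦
    ((2 : ℝ)⁻¹ * (e x)⁻¹ * ∑ μ, pd μ (fun y ↦ e y * t y μ) x) • Complex.I • 1 + r x • 1,
    fun u hu x ↦ ?_⟩
  have hflux (μ : Fin 4) : Differentiable ℝ fun y ν ↦ e y * g y μ ν := by fun_prop
  have hdiv : (e x)⁻¹ • ∑ μ, pd μ (fun y ↦ e y • ∑ ν, g y μ ν • pd ν u y) x =
      metricPrincipalPart Λ g x (fderiv ℝ (fderiv ℝ u) x) +
        (e x)⁻¹ • ∑ μ, ∑ ν, pd μ (fun y ↦ e y * g y μ ν) x • fderiv ℝ u x (Pi.single ν 1) := by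
    simp only [Finset.smul_sum, smul_smul, pd_sum_smul_pd (hflux _) hu, metricPrincipalPart,
      LinearMap.coe_mk, AddHom.coe_mk, Finset.sum_add_distrib, smul_add,
      inv_mul_cancel_left₀ (he0 x)]
  rw [Aop, hdiv]
  simp only [kineticFirstOrderPart, LinearMap.coe_mk, AddHom.coe_mk, pd, add_mul, smul_mul_assoc,
    one_mul, add_assoc]

end KineticOperator

theorem auxiliary_field_solution_general {𝕜 E Λ : Type*} [RCLike 𝕜] [NormedAddCommGroup E]
    [NormedSpace 𝕜 E] [NormedCommRing Λ] [NormedAlgebra 𝕜 Λ]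
    {A Ab : (E → Λ) → E → Λ} {P : E → (E →L[𝕜] E →L[𝕜] Λ) →ₗ[Λ] Λ}
    (hA : HasPrincipalPart A P) (hAb : HasPrincipalPart Ab P)
    {c cb B Bb f fb F Fb X Xb Y Yb : E → Λ}
    (hc : ContDiff 𝕜 2 c) (hcb : ContDiff 𝕜 2 cb) (hf : ContDiff 𝕜 2 f) (hfb : ContDiff 𝕜 2 fb)
    (hF : ContDiff 𝕜 2 F) (hFb : ContDiff 𝕜 2 Fb)
    (hc2 : ∀ x, c x * c x = 0) (hcb2 : ∀ x, cb x * cb x = 0)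
    (hfU : ∀ x, IsUnit (f x)) (hfbU : ∀ x, IsUnit (fb x))
    (hFU : ∀ x, IsUnit (F x)) (hFbU : ∀ x, IsUnit (Fb x))
    (hX : ∀ x, X x = (2 : 𝕜)⁻¹ • (c x * Ring.inverse (F x)))
    (hXb : ∀ x, Xb x = (2 : 𝕜)⁻¹ • (cb x * Ring.inverse (Fb x)))
    (hY : ∀ x, Y x = -((2 : 𝕜)⁻¹ • (c x * Ring.inverse (f x))))
    (hYb : ∀ x, Yb x = -((2 : 𝕜)⁻¹ • (cb x * Ring.inverse (fb x))))
    (heom : ∀ x, F x + f x = Xb x * Ring.inverse (Fb x) * (A X x + B x))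
    (heomb : ∀ x, Fb x + fb x = X x * Ring.inverse (F x) * (Ab Xb x + Bb x)) (x : E) :
    F x = -(f x) *
      (1 + Ring.inverse (f x * fb x) * (Yb x * (A Y x + B x)) *
        (1 - 3 * (Ring.inverse (f x * fb x) * (Y x * (Ab Yb x + Bb x)))
          - (2 : 𝕜)⁻¹ • (c x * Ring.inverse (f x ^ 2 * fb x) * Bb x))) := by
  have h := constrainedScalars_of_inverse hc hf hF hc2 hfU hFU hX hY
  have hb := constrainedScalars_of_inverse hcb hfb hFb hcb2 hfbU hFbU hXb hYb
  have hinv : Ring.inverse (f x * fb x) = Ring.inverse (f x) * Ring.inverse (fb x) := by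
    rw [Ring.mul_inverse_rev, mul_comm]
  have hcY : (2 : 𝕜)⁻¹ • (c x * Ring.inverse (f x ^ 2 * fb x) * Bb x) =
      -(Ring.inverse (f x) * Ring.inverse (fb x) * (Y x * Bb x)) := by
    rw [hY, pow_two, Ring.mul_inverse_rev, Ring.mul_inverse_rev]
    simp only [Algebra.smul_def]
    ring
  rw [hinv, hcY, sub_neg_eq_add]
  exact h.auxiliaryField_eq hb hA hAb heom (heomb x)

/-- **Eq. (4.22).** Explicit closed-form solution for the auxiliary field:
`F = −f [1 + 𝒜 (1 − 3 𝒜̄ − χ² (2 f² f̄)⁻¹ B̄)]`, where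
`𝒜 = (f f̄)⁻¹ Ȳ (A Y + B)` and `𝒜̄ = (f f̄)⁻¹ Y (Ā Ȳ + B̄)`. -/
theorem auxiliary_field_solution
    {Λ : Type*} [NormedCommRing Λ] [NormedAlgebra ℂ Λ]
    (c cb B Bb f fb F Fb : (Fin 4 → ℝ) → Λ)
    (t : (Fin 4 → ℝ) → Fin 4 → ℝ) (r : (Fin 4 → ℝ) → ℝ)
    (g : (Fin 4 → ℝ) → Fin 4 → Fin 4 → ℝ) (e : (Fin 4 → ℝ) → ℝ)
    -- smoothness of all data
    (hc : ContDiff ℝ (⊤ : ℕ∞) c) (hcb : ContDiff ℝ (⊤ : ℕ∞) cb)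
    (hB : ContDiff ℝ (⊤ : ℕ∞) B) (hBb : ContDiff ℝ (⊤ : ℕ∞) Bb)
    (hf : ContDiff ℝ (⊤ : ℕ∞) f) (hfb : ContDiff ℝ (⊤ : ℕ∞) fb)
    (hF : ContDiff ℝ (⊤ : ℕ∞) F) (hFb : ContDiff ℝ (⊤ : ℕ∞) Fb)
    (ht : ContDiff ℝ (⊤ : ℕ∞) t) (hr : ContDiff ℝ (⊤ : ℕ∞) r)
    (hg : ContDiff ℝ (⊤ : ℕ∞) g) (hgsym : ∀ x μ ν, g x μ ν = g x ν μ)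
    (he : ContDiff ℝ (⊤ : ℕ∞) e) (he0 : ∀ x, e x ≠ 0)
    -- nilpotency of the fermion bilinears
    (hc2 : ∀ x, c x * c x = 0) (hcb2 : ∀ x, cb x * cb x = 0)
    -- invertibility
    (hfU : ∀ x, IsUnit (f x)) (hfbU : ∀ x, IsUnit (fb x))
    (hFU : ∀ x, IsUnit (F x)) (hFbU : ∀ x, IsUnit (Fb x))
    -- the constrained scalars X = c/(2F), X̄ = c̄/(2F̄), Y = -c/(2f), Ȳ = -c̄/(2f̄)
    (X Xb Y Yb : (Fin 4 → ℝ) → Λ)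
    (hX : ∀ x, X x = (2 : ℝ)⁻¹ • (c x * Ring.inverse (F x)))
    (hXb : ∀ x, Xb x = (2 : ℝ)⁻¹ • (cb x * Ring.inverse (Fb x)))
    (hY : ∀ x, Y x = -((2 : ℝ)⁻¹ • (c x * Ring.inverse (f x))))
    (hYb : ∀ x, Yb x = -((2 : ℝ)⁻¹ • (cb x * Ring.inverse (fb x))))
    -- the auxiliary-field equations of motion (4.7):
    -- F + f = X̄ F̄⁻¹ (A X + B) and F̄ + f̄ = X F⁻¹ (Ā X̄ + B̄)
    (heom : ∀ x, F x + f x = Xb x * Ring.inverse (Fb x) * (Aop e g t r X x + B x))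
    (heomb : ∀ x, Fb x + fb x =
      X x * Ring.inverse (F x) * (Aop e g (fun y μ => -(t y μ)) r Xb x + Bb x))
    :
    ∀ x, F x = -(f x) *
      (1 + Ring.inverse (f x * fb x) * (Yb x * (Aop e g t r Y x + B x)) *
        (1 - 3 * (Ring.inverse (f x * fb x) *
              (Y x * (Aop e g (fun y μ => -(t y μ)) r Yb x + Bb x)))
          - (2 : ℝ)⁻¹ • (c x * Ring.inverse (f x ^ 2 * fb x) * Bb x))) := by
  have hC2 {u : (Fin 4 → ℝ) → Λ} (hu : ContDiff ℝ (⊤ : ℕ∞) u) : ContDiff ℝ 2 u :=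
    hu.of_le (WithTop.coe_le_coe.2 le_top)
  have hA := hasPrincipalPart_Aop (Λ := Λ) (he.differentiable (by simp))
    (hg.differentiable (by simp)) he0
  exact auxiliary_field_solution_general (hA t r) (hA (fun y μ ↦ -(t y μ)) r) (hC2 hc) (hC2 hcb)
    (hC2 hf) (hC2 hfb) (hC2 hF) (hC2 hFb) hc2 hcb2 hfU hfbU hFU hFbU hX hXb hY hYb heom heomb
end

section
/- (Eqs. (4.17)–(4.20): reduction of the X-dependent terms.) Under the stated hypotheses, the following pointwise identity holds on ℝ⁴: X̄·(A X) + X·B̄ + B·X̄ = Ȳ·(A Y) + Y·B̄ + B·Ȳ − 2·f f̄·𝒜·𝒜̄, where 𝒜 := (f f̄)⁻¹ Ȳ (A Y + B) and 𝒜̄ := (f f̄)⁻¹ Y (Ā Ȳ + B̄); i.e. the correction terms from X = Y(1 − 𝒜), X̄ = Ȳ(1 − 𝒜̄) combine to −2 f f̄ 𝒜 𝒜̄. -/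
open scoped BigOperators

/-!
If `s² = 0` then `s · D s = 0` for every derivation `D`. Hence a second-order operator `A`
satisfies `s · A (s v) = v · (s · A s)`, and `s · A s` depends only on the second-order part of `A`.
Since `A` and `Ā` have this part in common, `s · A (s v) = v · (s · Ā s)`.

The equations of motion give `Y - X = (f f̄)⁻¹ Y Ȳ (A X + B)`. As this is a multiple of `Ȳ`, the
identity above yields `Ȳ (A Y - A X) = (Y - X) Ā Ȳ`. As it is also a multiple of `Y`, multiplying
by `Y` gives `Y Ȳ (A Y - A X) = 0`, so `A X` may be replaced by `A Y` in the formula for `Y - X`: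
`X = Y (1 - 𝒜)`, and likewise `X̄ = Ȳ (1 - 𝒜̄)`. After substitution the first identity turns
`Ȳ (A Y - A X)` into `Y 𝒜 (Ā Ȳ)`, and each of the two corrections contributes `-f f̄ 𝒜 𝒜̄`.
-/

open scoped ContDiff Topology

section SquareZero

variable {k R : Type*} [CommSemiring k] [CommRing R] [Algebra k R]

theorem mul_derivation_eq_zero [IsAddTorsionFree R] (D : Derivation k R R) {s : R}
    (hs : s * s = 0) : s * D s = 0 := by
  have two_mul_eq_zero : s * D s + s * D s = 0 := by
    simpa only [hs, map_zero, smul_eq_mul] using (D.leibniz s s).symm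
  exact self_eq_neg.mp (eq_neg_of_add_eq_zero_left two_mul_eq_zero)

variable {ι : Type*} [Fintype ι]

/-- The differential operator `∑ μ, D μ ∘ J μ + E + q` of order at most two, for derivations
`D μ`, `J μ`, `E` and a multiplication operator `q`. -/
def secondOrderOp (D J : ι → Derivation k R R) (E : Derivation k R R) (q : R) : R →ₗ[k] R :=
  ∑ μ, (D μ).toLinearMap ∘ₗ (J μ).toLinearMap + E.toLinearMap + LinearMap.mulLeft k q

theorem secondOrderOp_apply (D J : ι → Derivation k R R) (E : Derivation k R R) (q u : R) :
    secondOrderOp D J E q u = ∑ μ, D μ (J μ u) + E u + q * u := by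
  simp [secondOrderOp]

theorem mul_secondOrderOp_mul [IsAddTorsionFree R] (D J : ι → Derivation k R R)
    (E E' : Derivation k R R) (q q' : R) {s : R} (hs : s * s = 0) (v : R) :
    s * secondOrderOp D J E q (s * v) = v * (s * secondOrderOp D J E' q' s) := by
  have second_order (μ : ι) : s * D μ (J μ (s * v)) = v * (s * D μ (J μ s)) := by
    simp only [Derivation.leibniz, map_add, smul_eq_mul]
    linear_combination D μ (J μ v) * hs + J μ v * mul_derivation_eq_zero (D μ) hs
      + D μ v * mul_derivation_eq_zero (J μ) hs
  have first_order : s * E (s * v) = 0 := by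
    rw [Derivation.leibniz, smul_eq_mul, smul_eq_mul]
    linear_combination E v * hs + v * mul_derivation_eq_zero E hs
  simp only [secondOrderOp_apply, mul_add, Finset.mul_sum, second_order]
  linear_combination first_order + q * v * hs - v * mul_derivation_eq_zero E' hs
    - v * q' * hs

end SquareZero

section AuxiliaryFields

variable {R : Type*} [CommRing R]

theorem mul_inv_eq_neg_mul_inv_of_add_eq {s m : R} {u v : Rˣ} (hs : s * s = 0)
    (h : (u + v : R) = s * m) : s * ↑u⁻¹ = -(s * ↑v⁻¹) := by
  linear_combination ↑u⁻¹ * ↑v⁻¹ * (s * h + m * hs) - s * ↑v⁻¹ * u.mul_inv - s * ↑u⁻¹ * v.mul_inv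

/-- The equations of motion of the auxiliary fields `F`, `F̄` for operators `A`, `Ā` on a
commutative ring. The relations `X = c / (2F)` and `Y = -c / (2f)` enter with `c` eliminated. -/
structure AuxiliaryFieldEquations (A Ab : R → R) (B Bb X Xb Y Yb : R) (f fb F Fb : Rˣ) :
    Prop where
  Y_mul_self : Y * Y = 0
  Yb_mul_self : Yb * Yb = 0
  X_eq : X = -(Y * f * ↑F⁻¹)
  Xb_eq : Xb = -(Yb * fb * ↑Fb⁻¹)
  F_add_f : (F + f : R) = Xb * ↑Fb⁻¹ * (A X + B)
  Fb_add_fb : (Fb + fb : R) = X * ↑F⁻¹ * (Ab Xb + Bb)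

namespace AuxiliaryFieldEquations

section Algebra

variable {A Ab : R → R} {B Bb X Xb Y Yb : R} {f fb F Fb : Rˣ}

theorem of_eq_mul_inv {θ θb : R} (hθ : θ * θ = 0) (hθb : θb * θb = 0)
    (hX : X = θ * ↑F⁻¹) (hXb : Xb = θb * ↑Fb⁻¹) (hY : Y = -(θ * ↑f⁻¹)) (hYb : Yb = -(θb * ↑fb⁻¹))
    (heom : (F + f : R) = Xb * ↑Fb⁻¹ * (A X + B))
    (heomb : (Fb + fb : R) = X * ↑F⁻¹ * (Ab Xb + Bb)) :
    AuxiliaryFieldEquations A Ab B Bb X Xb Y Yb f fb F Fb where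
  Y_mul_self := by rw [hY]; linear_combination ↑f⁻¹ * ↑f⁻¹ * hθ
  Yb_mul_self := by rw [hYb]; linear_combination ↑fb⁻¹ * ↑fb⁻¹ * hθb
  X_eq := by rw [hX, hY, neg_mul, neg_mul, neg_neg, Units.inv_mul_cancel_right]
  Xb_eq := by rw [hXb, hYb, neg_mul, neg_mul, neg_neg, Units.inv_mul_cancel_right]
  F_add_f := heom
  Fb_add_fb := heomb

theorem symm (h : AuxiliaryFieldEquations A Ab B Bb X Xb Y Yb f fb F Fb) :
    AuxiliaryFieldEquations Ab A Bb B Xb X Yb Y fb f Fb F :=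
  ⟨h.Yb_mul_self, h.Y_mul_self, h.Xb_eq, h.X_eq, h.Fb_add_fb, h.F_add_f⟩

theorem Y_mul_inv_Fb (h : AuxiliaryFieldEquations A Ab B Bb X Xb Y Yb f fb F Fb) :
    Y * ↑Fb⁻¹ = -(Y * ↑fb⁻¹) := by
  refine mul_inv_eq_neg_mul_inv_of_add_eq h.Y_mul_self
    (m := -(f * ↑F⁻¹ * ↑F⁻¹ * (Ab Xb + Bb))) ?_
  linear_combination h.Fb_add_fb + ↑F⁻¹ * (Ab Xb + Bb) * h.X_eq

theorem Y_sub_X (h : AuxiliaryFieldEquations A Ab B Bb X Xb Y Yb f fb F Fb) :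
    Y - X = ↑(f * fb)⁻¹ * (Y * Yb * (A X + B)) := by
  have Y_mul_Xb : Y * Xb * ↑Fb⁻¹ = -(Y * Yb * ↑fb⁻¹) := by
    rw [h.Xb_eq]
    linear_combination (-(Yb * fb * ↑Fb⁻¹) + Yb) * h.Y_mul_inv_Fb
      + Y * Yb * ↑Fb⁻¹ * fb.mul_inv
  rw [mul_inv, Units.val_mul]
  linear_combination -h.X_eq - Y * F.mul_inv + Y * ↑F⁻¹ * h.F_add_f
    + ↑F⁻¹ * (A X + B) * Y_mul_Xb - Y * ↑fb⁻¹ * (A X + B) * h.symm.Y_mul_inv_Fb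

end Algebra

section Operators

variable {k : Type*} [CommSemiring k] [Algebra k R] {A Ab : R →ₗ[k] R} {B Bb X Xb Y Yb : R}
  {f fb F Fb : Rˣ}

theorem Yb_mul_sub (h : AuxiliaryFieldEquations A Ab B Bb X Xb Y Yb f fb F Fb)
    (hA : ∀ s v, s * s = 0 → s * A (s * v) = v * (s * Ab s)) :
    Yb * (A Y - A X) = (Y - X) * Ab Yb := by
  have Y_sub_X' : Y - X = Yb * (↑(f * fb)⁻¹ * Y * (A X + B)) := by
    linear_combination h.Y_sub_X
  rw [← map_sub, Y_sub_X', hA _ _ h.Yb_mul_self]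
  ring

theorem Y_mul_Yb_mul_sub (h : AuxiliaryFieldEquations A Ab B Bb X Xb Y Yb f fb F Fb)
    (hA : ∀ s v, s * s = 0 → s * A (s * v) = v * (s * Ab s)) :
    Y * Yb * (A Y - A X) = 0 := by
  linear_combination Y * h.Yb_mul_sub hA + Y * Ab Yb * h.Y_sub_X
    + ↑(f * fb)⁻¹ * Yb * (A X + B) * Ab Yb * h.Y_mul_self

theorem X_eq_Y_mul_one_sub (h : AuxiliaryFieldEquations A Ab B Bb X Xb Y Yb f fb F Fb)
    (hA : ∀ s v, s * s = 0 → s * A (s * v) = v * (s * Ab s)) :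
    X = Y * (1 - ↑(f * fb)⁻¹ * (Yb * (A Y + B))) := by
  linear_combination -h.Y_sub_X + ↑(f * fb)⁻¹ * h.Y_mul_Yb_mul_sub hA

theorem X_terms_eq (h : AuxiliaryFieldEquations A Ab B Bb X Xb Y Yb f fb F Fb)
    (hA : ∀ s v, s * s = 0 → s * A (s * v) = v * (s * Ab s))
    (hAb : ∀ s v, s * s = 0 → s * Ab (s * v) = v * (s * A s)) :
    Xb * A X + X * Bb + B * Xb = Yb * A Y + Y * Bb + B * Yb
      - 2 * ↑(f * fb) * (↑(f * fb)⁻¹ * (Yb * (A Y + B)))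
        * (↑(f * fb)⁻¹ * (Y * (Ab Yb + Bb))) := by
  set a := ↑(f * fb)⁻¹ * (Yb * (A Y + B))
  set ab := ↑(f * fb)⁻¹ * (Y * (Ab Yb + Bb)) with ab_def
  have X_eq : X = Y * (1 - a) := h.X_eq_Y_mul_one_sub hA
  have Xb_eq : Xb = Yb * (1 - ab) := by
    rw [h.symm.X_eq_Y_mul_one_sub hAb, ab_def, mul_comm fb f]
  have mul_a : ↑(f * fb) * a = Yb * (A Y + B) := Units.mul_inv_cancel_left _ _
  have mul_ab : ↑(f * fb) * ab = Y * (Ab Yb + Bb) := Units.mul_inv_cancel_left _ _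
  have ab_mul_sub : ab * (Yb * (A Y - A X)) = 0 := by
    linear_combination ↑(f * fb)⁻¹ * (Ab Yb + Bb) * h.Y_mul_Yb_mul_sub hA
      + Yb * (A Y - A X) * ab_def
  calc Xb * A X + X * Bb + B * Xb
      = Yb * A Y + Y * Bb + B * Yb - Yb * (A Y - A X) - Y * a * Bb
          - ab * (Yb * (A X + B)) := by
        linear_combination (A X + B) * Xb_eq + Bb * X_eq
    _ = Yb * A Y + Y * Bb + B * Yb - a * (Y * (Ab Yb + Bb)) - ab * (Yb * (A Y + B)) := by
        linear_combination ab_mul_sub - h.Yb_mul_sub hA + Ab Yb * X_eq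
    _ = Yb * A Y + Y * Bb + B * Yb - 2 * ↑(f * fb) * a * ab := by
        linear_combination a * mul_ab + ab * mul_a

end Operators

end AuxiliaryFieldEquations

end AuxiliaryFields

section RingInverse

variable {R : Type*} [NormedRing R]

-- Completeness would make the units open; without it, continuity descends from the completion.
theorem continuousOn_ringInverse : ContinuousOn Ring.inverse {a : R | IsUnit a} := by
  let ι : R →+* UniformSpace.Completion R := UniformSpace.Completion.coeRingHom
  have hι : Continuous ι := UniformSpace.Completion.continuous_coe R
  have map_inverse : Set.EqOn (ι ∘ Ring.inverse) (Ring.inverse ∘ ι) {a | IsUnit a} := by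
    rintro _ ⟨u, rfl⟩
    simpa using (Ring.inverse_unit (Units.map ι.toMonoidHom u)).symm
  rw [(UniformSpace.Completion.isUniformInducing_coe R).isInducing.continuousOn_iff]
  refine ContinuousOn.congr (fun a ha => ?_) map_inverse
  obtain ⟨v, hv⟩ := IsUnit.map ι ha
  have inverse_at : ContinuousAt Ring.inverse (ι a) := hv ▸ NormedRing.inverse_continuousAt v
  exact (inverse_at.comp hι.continuousAt).continuousWithinAt

variable {𝕜 : Type*} [NontriviallyNormedField 𝕜] [NormedAlgebra 𝕜 R]

theorem hasFDerivWithinAt_ringInverse {a : R} (ha : IsUnit a) :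
    HasFDerivWithinAt Ring.inverse
      (-ContinuousLinearMap.mulLeftRight 𝕜 R (Ring.inverse a) (Ring.inverse a))
      {b : R | IsUnit b} a := by
  have inverse_sub : (fun b : R => Ring.inverse b - Ring.inverse a) =o[𝓝[{b | IsUnit b}] a]
      fun _ => (1 : ℝ) := by
    rw [Asymptotics.isLittleO_one_iff, tendsto_sub_nhds_zero_iff]
    exact continuousOn_ringInverse a ha
  have sub_mul_inverse : (fun b : R => (b - a) * Ring.inverse a) =O[𝓝[{b | IsUnit b}] a]
      fun b => ‖b - a‖ :=
    .of_bound ‖Ring.inverse a‖ <| .of_forall fun b => by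
      simpa [mul_comm] using norm_mul_le (b - a) (Ring.inverse a)
  have remainder : (fun b : R => -((Ring.inverse b - Ring.inverse a) * ((b - a) * Ring.inverse a)))
      =o[𝓝[{b | IsUnit b}] a] fun b => b - a := by
    simpa using inverse_sub.mul_isBigO sub_mul_inverse
  refine .of_isLittleO (remainder.congr' ?_ .rfl)
  filter_upwards [self_mem_nhdsWithin] with b hb
  rw [neg_apply, ContinuousLinearMap.mulLeftRight_apply]
  linear_combination (norm := noncomm_ring) -Ring.inverse_sub_inverse (iff_of_true hb ha)

variable {E : Type*} [NormedAddCommGroup E] [NormedSpace 𝕜 E]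

theorem contDiff_ringInverse_s11 {u : E → R} (hu : ContDiff 𝕜 ∞ u) (hU : ∀ x, IsUnit (u x)) :
    ContDiff 𝕜 ∞ fun x => Ring.inverse (u x) := by
  let v (x : E) : R := Ring.inverse (u x)
  have hasFDerivAt_v (x : E) : HasFDerivAt v
      ((-ContinuousLinearMap.mulLeftRight 𝕜 R (v x) (v x)) ∘L fderiv 𝕜 u x) x :=
    (hasFDerivWithinAt_ringInverse (hU x)).comp_hasFDerivAt x
      (hu.differentiable (by simp) x).hasFDerivAt (.of_forall hU)
  suffices ∀ n : ℕ, ContDiff 𝕜 n v from contDiff_infty.2 this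
  intro n
  induction n with
  | zero => exact contDiff_zero.2 (continuousOn_ringInverse.comp_continuous hu.continuous hU)
  | succ n contDiff_v =>
    refine contDiff_succ_iff_hasFDerivAt.2 ⟨_, ?_, hasFDerivAt_v⟩
    have contDiff_fderiv : ContDiff 𝕜 n (fderiv 𝕜 u) :=
      (contDiff_infty_iff_fderiv.1 hu).2.of_le (mod_cast le_top)
    have contDiff_mulLeftRight : ContDiff 𝕜 n
        fun x => ContinuousLinearMap.mulLeftRight 𝕜 R (v x) (v x) :=
      (contDiff_v.continuousLinearMap_comp (ContinuousLinearMap.mulLeftRight 𝕜 R)).clm_apply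
        contDiff_v
    exact contDiff_mulLeftRight.neg.clm_comp contDiff_fderiv

end RingInverse

section SmoothFunctions

variable (𝕜 E A : Type*) [NontriviallyNormedField 𝕜] [NormedAddCommGroup E] [NormedSpace 𝕜 E]
  [NormedCommRing A] [NormedAlgebra 𝕜 A]

/-- The algebra of smooth functions on a normed space with values in a normed algebra. -/
def smoothFunctions : Subalgebra 𝕜 (E → A) where
  carrier := {u | ContDiff 𝕜 ∞ u}
  mul_mem' {u v} (hu : ContDiff 𝕜 ∞ u) (hv : ContDiff 𝕜 ∞ v) := hu.mul hv
  add_mem' {u v} (hu : ContDiff 𝕜 ∞ u) (hv : ContDiff 𝕜 ∞ v) := hu.add hv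
  algebraMap_mem' c := (contDiff_const : ContDiff 𝕜 ∞ fun _ : E => algebraMap 𝕜 A c)

namespace smoothFunctions

variable {𝕜 E A}

theorem contDiff (u : smoothFunctions 𝕜 E A) : ContDiff 𝕜 ∞ u.1 := u.2

theorem differentiable (u : smoothFunctions 𝕜 E A) : Differentiable 𝕜 u.1 :=
  (contDiff u).differentiable (by simp)

theorem coe_units_inv (u : (smoothFunctions 𝕜 E A)ˣ) (x : E) :
    (↑u⁻¹ : smoothFunctions 𝕜 E A).1 x = Ring.inverse ((u : smoothFunctions 𝕜 E A).1 x) :=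
  let eval := (Pi.evalRingHom (fun _ : E => A) x).comp (smoothFunctions 𝕜 E A).val.toRingHom
  (Ring.inverse_unit (Units.map eval.toMonoidHom u)).symm

theorem exists_units_coe_eq {u : E → A} (hu : ContDiff 𝕜 ∞ u) (hU : ∀ x, IsUnit (u x)) :
    ∃ v : (smoothFunctions 𝕜 E A)ˣ, (v : smoothFunctions 𝕜 E A).1 = u :=
  ⟨.mkOfMulEqOne ⟨u, hu⟩ ⟨_, contDiff_ringInverse_s11 hu hU⟩ <|
    Subtype.ext <| funext fun x => Ring.mul_inverse_cancel _ (hU x), rfl⟩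

/-- The derivation of the algebra of smooth functions along a smooth vector field `w`. -/
noncomputable def lieDerivation (w : E → E) (hw : ContDiff 𝕜 ∞ w) :
    Derivation 𝕜 (smoothFunctions 𝕜 E A) (smoothFunctions 𝕜 E A) :=
  .mk'
    { toFun u :=
        ⟨fun x => fderiv 𝕜 u.1 x (w x), (contDiff_infty_iff_fderiv.1 (contDiff u)).2.clm_apply hw⟩
      map_add' u v := Subtype.ext <| funext fun x => by
        simp [fderiv_add (differentiable u x) (differentiable v x)]
      map_smul' c u := Subtype.ext <| funext fun x => by
        simp [fderiv_const_smul (differentiable u x) c] }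
    fun u v => Subtype.ext <| funext fun x => by
      simp [fderiv_mul (differentiable u x) (differentiable v x)]

theorem lieDerivation_apply {w : E → E} (hw : ContDiff 𝕜 ∞ w) (u : smoothFunctions 𝕜 E A) :
    (lieDerivation (A := A) w hw u).1 = fun x => fderiv 𝕜 u.1 x (w x) := rfl

end smoothFunctions

end SmoothFunctions

section KineticOperator

theorem sum_smul_pd {V : Type*} [NormedAddCommGroup V] [NormedSpace ℝ V] (w : Fin 4 → ℝ)
    (u : (Fin 4 → ℝ) → V) (x : Fin 4 → ℝ) : ∑ μ, w μ • pd μ u x = fderiv ℝ u x w := by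
  conv_rhs => rw [pi_eq_sum_univ' w]
  simp [pd]

variable {Λ : Type*} [NormedCommRing Λ] [NormedAlgebra ℂ Λ]

open smoothFunctions in
theorem exists_secondOrderOp_eq_Aop {e : (Fin 4 → ℝ) → ℝ} {g : (Fin 4 → ℝ) → Fin 4 → Fin 4 → ℝ}
    (he : ContDiff ℝ ∞ e) (he0 : ∀ x, e x ≠ 0) (hg : ContDiff ℝ ∞ g) :
    ∃ D J : Fin 4 → Derivation ℝ (smoothFunctions ℝ (Fin 4 → ℝ) Λ) _,
      ∀ (t : (Fin 4 → ℝ) → Fin 4 → ℝ) (r : (Fin 4 → ℝ) → ℝ), ContDiff ℝ ∞ t → ContDiff ℝ ∞ r →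
        ∃ E q, ∀ u, (secondOrderOp D J E q u).1 = Aop e g t r u.1 := by
  refine ⟨fun μ => lieDerivation (fun x => (e x)⁻¹ • Pi.single μ 1)
      ((he.inv he0).smul contDiff_const),
    fun μ => lieDerivation (fun x => e x • g x μ) (he.smul (contDiff_pi.1 hg μ)),
    fun t r ht hr => ?_⟩
  let I : smoothFunctions ℝ (Fin 4 → ℝ) Λ :=
    ⟨fun _ => algebraMap ℂ Λ Complex.I, (contDiff_const : ContDiff ℝ ∞ _)⟩
  let div (x : Fin 4 → ℝ) : ℝ := ∑ μ, fderiv ℝ (fun y => e y * t y μ) x (Pi.single μ 1)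
  have contDiff_div : ContDiff ℝ ∞ div := ContDiff.sum fun μ _ =>
    (contDiff_infty_iff_fderiv.1 (he.mul (contDiff_pi.1 ht μ))).2.clm_apply contDiff_const
  let q (x : Fin 4 → ℝ) : Λ :=
    ((2 : ℝ)⁻¹ * (e x)⁻¹ * div x) • algebraMap ℂ Λ Complex.I + r x • (1 : Λ)
  have contDiff_q : ContDiff ℝ ∞ q :=
    (((contDiff_const.mul (he.inv he0)).mul contDiff_div).smul contDiff_const).add
      (hr.smul contDiff_const)
  refine ⟨I • lieDerivation t ht, ⟨q, contDiff_q⟩, fun u => funext fun x => ?_⟩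
  have I_mul (a : Λ) : algebraMap ℂ Λ Complex.I * a = Complex.I • a :=
    (Algebra.smul_def _ _).symm
  have q_mul : q x * u.1 x =
      ((2 : ℝ)⁻¹ * (e x)⁻¹ * div x) • (Complex.I • u.1 x) + r x • u.1 x := by
    rw [add_mul, smul_mul_assoc, smul_one_mul, I_mul]
  simp only [Aop, sum_smul_pd]
  simp [secondOrderOp_apply, lieDerivation_apply, pd, I, I_mul, q_mul, div, Finset.smul_sum,
    add_assoc]

theorem exists_linearMap_eq_Aop {e : (Fin 4 → ℝ) → ℝ} {g : (Fin 4 → ℝ) → Fin 4 → Fin 4 → ℝ}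
    {t tb : (Fin 4 → ℝ) → Fin 4 → ℝ} {r rb : (Fin 4 → ℝ) → ℝ}
    (he : ContDiff ℝ ∞ e) (he0 : ∀ x, e x ≠ 0) (hg : ContDiff ℝ ∞ g)
    (ht : ContDiff ℝ ∞ t) (hr : ContDiff ℝ ∞ r) (htb : ContDiff ℝ ∞ tb) (hrb : ContDiff ℝ ∞ rb) :
    ∃ A Ab : smoothFunctions ℝ (Fin 4 → ℝ) Λ →ₗ[ℝ] smoothFunctions ℝ (Fin 4 → ℝ) Λ,
      (∀ u, (A u).1 = Aop e g t r u.1) ∧ (∀ u, (Ab u).1 = Aop e g tb rb u.1) ∧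
      (∀ s v, s * s = 0 → s * A (s * v) = v * (s * Ab s)) ∧
      (∀ s v, s * s = 0 → s * Ab (s * v) = v * (s * A s)) := by
  have : IsAddTorsionFree (smoothFunctions ℝ (Fin 4 → ℝ) Λ) := .of_isTorsionFree ℝ _
  obtain ⟨D, J, exists_lower_order⟩ := exists_secondOrderOp_eq_Aop (Λ := Λ) he he0 hg
  obtain ⟨E, q, hA⟩ := exists_lower_order t r ht hr
  obtain ⟨Eb, qb, hAb⟩ := exists_lower_order tb rb htb hrb
  exact ⟨secondOrderOp D J E q, secondOrderOp D J Eb qb, hA, hAb,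
    fun _ v hs => mul_secondOrderOp_mul D J E Eb q qb hs v,
    fun _ v hs => mul_secondOrderOp_mul D J Eb E qb q hs v⟩

end KineticOperator

open smoothFunctions in
theorem X_terms_reduction_general
    {Λ : Type*} [NormedCommRing Λ] [NormedAlgebra ℂ Λ]
    (c cb B Bb f fb F Fb : (Fin 4 → ℝ) → Λ)
    (t tb : (Fin 4 → ℝ) → Fin 4 → ℝ) (r rb : (Fin 4 → ℝ) → ℝ)
    (g : (Fin 4 → ℝ) → Fin 4 → Fin 4 → ℝ) (e : (Fin 4 → ℝ) → ℝ)
    (hc : ContDiff ℝ ∞ c) (hcb : ContDiff ℝ ∞ cb) (hB : ContDiff ℝ ∞ B) (hBb : ContDiff ℝ ∞ Bb)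
    (hf : ContDiff ℝ ∞ f) (hfb : ContDiff ℝ ∞ fb) (hF : ContDiff ℝ ∞ F) (hFb : ContDiff ℝ ∞ Fb)
    (ht : ContDiff ℝ ∞ t) (htb : ContDiff ℝ ∞ tb) (hr : ContDiff ℝ ∞ r) (hrb : ContDiff ℝ ∞ rb)
    (hg : ContDiff ℝ ∞ g) (he : ContDiff ℝ ∞ e) (he0 : ∀ x, e x ≠ 0)
    (hc2 : ∀ x, c x * c x = 0) (hcb2 : ∀ x, cb x * cb x = 0)
    (hfU : ∀ x, IsUnit (f x)) (hfbU : ∀ x, IsUnit (fb x))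
    (hFU : ∀ x, IsUnit (F x)) (hFbU : ∀ x, IsUnit (Fb x))
    (X Xb Y Yb : (Fin 4 → ℝ) → Λ)
    (hX : ∀ x, X x = (2 : ℝ)⁻¹ • (c x * Ring.inverse (F x)))
    (hXb : ∀ x, Xb x = (2 : ℝ)⁻¹ • (cb x * Ring.inverse (Fb x)))
    (hY : ∀ x, Y x = -((2 : ℝ)⁻¹ • (c x * Ring.inverse (f x))))
    (hYb : ∀ x, Yb x = -((2 : ℝ)⁻¹ • (cb x * Ring.inverse (fb x))))
    (heom : ∀ x, F x + f x = Xb x * Ring.inverse (Fb x) * (Aop e g t r X x + B x))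
    (heomb : ∀ x, Fb x + fb x = X x * Ring.inverse (F x) * (Aop e g tb rb Xb x + Bb x)) :
    ∀ x, Xb x * Aop e g t r X x + X x * Bb x + B x * Xb x
      = Yb x * Aop e g t r Y x + Y x * Bb x + B x * Yb x
        - 2 * (f x * fb x) * (Ring.inverse (f x * fb x) * (Yb x * (Aop e g t r Y x + B x))) *
            (Ring.inverse (f x * fb x) * (Y x * (Aop e g tb rb Yb x + Bb x))) := by
  obtain ⟨A, Ab, hA, hAb, mul_A_mul, mul_Ab_mul⟩ :=
    exists_linearMap_eq_Aop (Λ := Λ) he he0 hg ht hr htb hrb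
  have contDiff_mul_inverse {u v : (Fin 4 → ℝ) → Λ} (hu : ContDiff ℝ ∞ u) (hv : ContDiff ℝ ∞ v)
      (hvU : ∀ x, IsUnit (v x)) :
      ContDiff ℝ ∞ fun x => (2 : ℝ)⁻¹ • (u x * Ring.inverse (v x)) :=
    (hu.mul (contDiff_ringInverse_s11 hv hvU)).const_smul _
  lift X to smoothFunctions ℝ (Fin 4 → ℝ) Λ using funext hX ▸ contDiff_mul_inverse hc hF hFU
  lift Xb to smoothFunctions ℝ (Fin 4 → ℝ) Λ using funext hXb ▸ contDiff_mul_inverse hcb hFb hFbU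
  lift Y to smoothFunctions ℝ (Fin 4 → ℝ) Λ using
    funext hY ▸ (contDiff_mul_inverse hc hf hfU).neg
  lift Yb to smoothFunctions ℝ (Fin 4 → ℝ) Λ using
    funext hYb ▸ (contDiff_mul_inverse hcb hfb hfbU).neg
  lift c to smoothFunctions ℝ (Fin 4 → ℝ) Λ using hc
  lift cb to smoothFunctions ℝ (Fin 4 → ℝ) Λ using hcb
  lift B to smoothFunctions ℝ (Fin 4 → ℝ) Λ using hB
  lift Bb to smoothFunctions ℝ (Fin 4 → ℝ) Λ using hBb
  obtain ⟨f, rfl⟩ := exists_units_coe_eq hf hfU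
  obtain ⟨fb, rfl⟩ := exists_units_coe_eq hfb hfbU
  obtain ⟨F, rfl⟩ := exists_units_coe_eq hF hFU
  obtain ⟨Fb, rfl⟩ := exists_units_coe_eq hFb hFbU
  have inverse_mul (x : Fin 4 → ℝ) : Ring.inverse (f.1.1 x * fb.1.1 x) = (f * fb)⁻¹.1.1 x :=
    (coe_units_inv (f * fb) x).symm
  simp only [← coe_units_inv, inverse_mul, ← hA, ← hAb] at hX hXb hY hYb heom heomb ⊢
  have eom : AuxiliaryFieldEquations A Ab B Bb X Xb Y Yb f fb F Fb :=
    .of_eq_mul_inv (θ := (2 : ℝ)⁻¹ • c) (θb := (2 : ℝ)⁻¹ • cb)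
      (by ext x; simp [hc2]) (by ext x; simp [hcb2])
      (by ext x; simp [hX]) (by ext x; simp [hXb]) (by ext x; simp [hY]) (by ext x; simp [hYb])
      (Subtype.ext <| funext heom) (Subtype.ext <| funext heomb)
  exact congrFun <| congrArg Subtype.val <| eom.X_terms_eq mul_A_mul mul_Ab_mul

/-- **Eqs. (4.17)–(4.20).** Reduction of the `X`-dependent terms: the correction
terms from `X = Y(1 − 𝒜)`, `X̄ = Ȳ(1 − 𝒜̄)` combine to `−2 f f̄ 𝒜 𝒜̄`, i.e.
`X̄ A X + X B̄ + B X̄ = Ȳ A Y + Y B̄ + B Ȳ − 2 f f̄ 𝒜 𝒜̄`. -/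
theorem X_terms_reduction
    {Λ : Type*} [NormedCommRing Λ] [NormedAlgebra ℂ Λ]
    (c cb B Bb f fb F Fb : (Fin 4 → ℝ) → Λ)
    (t : (Fin 4 → ℝ) → Fin 4 → ℝ) (r : (Fin 4 → ℝ) → ℝ)
    (g : (Fin 4 → ℝ) → Fin 4 → Fin 4 → ℝ) (e : (Fin 4 → ℝ) → ℝ)
    -- smoothness of all data
    (hc : ContDiff ℝ (⊤ : ℕ∞) c) (hcb : ContDiff ℝ (⊤ : ℕ∞) cb)
    (hB : ContDiff ℝ (⊤ : ℕ∞) B) (hBb : ContDiff ℝ (⊤ : ℕ∞) Bb)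
    (hf : ContDiff ℝ (⊤ : ℕ∞) f) (hfb : ContDiff ℝ (⊤ : ℕ∞) fb)
    (hF : ContDiff ℝ (⊤ : ℕ∞) F) (hFb : ContDiff ℝ (⊤ : ℕ∞) Fb)
    (ht : ContDiff ℝ (⊤ : ℕ∞) t) (hr : ContDiff ℝ (⊤ : ℕ∞) r)
    (hg : ContDiff ℝ (⊤ : ℕ∞) g) (hgsym : ∀ x μ ν, g x μ ν = g x ν μ)
    (he : ContDiff ℝ (⊤ : ℕ∞) e) (he0 : ∀ x, e x ≠ 0)
    -- nilpotency of the fermion bilinears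
    (hc2 : ∀ x, c x * c x = 0) (hcb2 : ∀ x, cb x * cb x = 0)
    -- invertibility
    (hfU : ∀ x, IsUnit (f x)) (hfbU : ∀ x, IsUnit (fb x))
    (hFU : ∀ x, IsUnit (F x)) (hFbU : ∀ x, IsUnit (Fb x))
    -- the constrained scalars X = c/(2F), X̄ = c̄/(2F̄), Y = -c/(2f), Ȳ = -c̄/(2f̄)
    (X Xb Y Yb : (Fin 4 → ℝ) → Λ)
    (hX : ∀ x, X x = (2 : ℝ)⁻¹ • (c x * Ring.inverse (F x)))
    (hXb : ∀ x, Xb x = (2 : ℝ)⁻¹ • (cb x * Ring.inverse (Fb x)))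
    (hY : ∀ x, Y x = -((2 : ℝ)⁻¹ • (c x * Ring.inverse (f x))))
    (hYb : ∀ x, Yb x = -((2 : ℝ)⁻¹ • (cb x * Ring.inverse (fb x))))
    -- the auxiliary-field equations of motion (4.7):
    -- F + f = X̄ F̄⁻¹ (A X + B) and F̄ + f̄ = X F⁻¹ (Ā X̄ + B̄)
    (heom : ∀ x, F x + f x = Xb x * Ring.inverse (Fb x) * (Aop e g t r X x + B x))
    (heomb : ∀ x, Fb x + fb x =
      X x * Ring.inverse (F x) * (Aop e g (fun y μ => -(t y μ)) r Xb x + Bb x))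
    :
    ∀ x, Xb x * Aop e g t r X x + X x * Bb x + B x * Xb x
      = Yb x * Aop e g t r Y x + Y x * Bb x + B x * Yb x
        - 2 * (f x * fb x) *
            (Ring.inverse (f x * fb x) * (Yb x * (Aop e g t r Y x + B x))) *
            (Ring.inverse (f x * fb x) *
              (Y x * (Aop e g (fun y μ => -(t y μ)) r Yb x + Bb x))) := by
  exact X_terms_reduction_general c cb B Bb f fb F Fb t (fun y μ => -(t y μ)) r r g e hc hcb hB hBb
    hf hfb hF hFb ht ht.neg hr hr hg he he0 hc2 hcb2 hfU hfbU hFU hFbU X Xb Y Yb hX hXb hY hYb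
    heom heomb
end
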